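/- arXiv:2407.12596 — 10 statements merged into one kernel-verified Lean document; each statement's English description precedes it below -/
import Mathlib

section
/- Let p be a prime, r ∈ ℕ_{≥1}, R = ℤ/p^rℤ with maximal ideal I = pR, let n ≥ 4 be even, and let ε ∈ {1, -1} ⊆ R. Let ω_n be the number of ε-quiddity cycles of length n over R/I ≅ 𝔽_p, and let σ := |{(c₁,…,cₙ) ∈ Iⁿ : [c₁,…,cₙ] = (-1)^{n/2}·Id}|. Then the number of ε-quiddity cycles of length n over R equals: (ω_n − 1)·p^{(r-1)(n-3)} + σ if ε = (-1)^{n/2}; ω_n·p^{(r-1)(n-3)} if ε = −(-1)^{n/2} and p > 2; and (ω_n − 1)·p^{(r-1)(n-3)} if p = 2 and ε = −(-1)^{n/2} with ε ≠ (-1)^{n/2}. -/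
open Matrix

/-- `η(a)` is the matrix `![![a, -1], ![1, 0]]`. -/
def eta {R : Type*} [CommRing R] (a : R) : Matrix (Fin 2) (Fin 2) R := !![a, -1; 1, 0]

/-- `[c₁, …, cₙ] = η(c₁)·η(c₂)⋯η(cₙ)`. -/
def prodEta {R : Type*} [CommRing R] {n : ℕ} (c : Fin n → R) : Matrix (Fin 2) (Fin 2) R :=
  (List.ofFn fun i => eta (c i)).prod


section helpers
variable {R : Type*} [CommRing R]

theorem prodEta_succ {n : ℕ} (c : Fin (n+1) → R) :
    prodEta c = eta (c 0) * prodEta (fun i => c i.succ) := by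
  simp [prodEta, List.ofFn_succ]

theorem prodEta_castSucc {n : ℕ} (c : Fin (n+1) → R) :
    prodEta c = prodEta (fun i => c i.castSucc) * eta (c (Fin.last n)) := by
  rw [prodEta, List.ofFn_succ', List.concat_eq_append, List.prod_append]; simp [prodEta]

theorem prodEta_three {n : ℕ} (c : Fin (n+3) → R) :
    prodEta c = (eta (c 0) * eta (c 1) * eta (c 2)) * prodEta (fun i => c i.succ.succ.succ) := by
  rw [prodEta_succ, prodEta_succ, prodEta_succ, mul_assoc, mul_assoc]; rfl

theorem eta_three (a u b : R) :
    eta a * eta u * eta b = !![(a*u-1)*b - a, -(a*u-1); u*b-1, -u] := by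
  simp only [eta, Matrix.mul_fin_two]
  congr 1; ext i j; fin_cases i <;> fin_cases j <;> simp <;> ring

theorem eta_det (a : R) : (eta a).det = 1 := by simp [eta]

theorem prodEta_det {n : ℕ} (c : Fin n → R) : (prodEta c).det = 1 := by
  induction n with
  | zero => simp [prodEta]
  | succ n ih => rw [prodEta_succ, Matrix.det_mul, ih, eta_det, one_mul]

theorem prodEta_map {S : Type*} [CommRing S] (f : R →+* S) {n : ℕ} (c : Fin n → R) :
    (prodEta c).map f = prodEta (fun i => f (c i)) := by
  induction n with
  | zero => simp [prodEta]
  | succ n ih =>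
    rw [prodEta_succ, Matrix.map_mul, ih, prodEta_succ (fun i => f (c i))]
    congr 1
    ext i j; fin_cases i <;> fin_cases j <;> simp [eta]

theorem prodEta_near (I : Ideal R) (k : ℕ) (c : Fin (2*k) → R) (hc : ∀ i, c i ∈ I) :
    ∃ x y z w : R, x ∈ I^2 ∧ w ∈ I^2 ∧ y ∈ I ∧ z ∈ I ∧
      prodEta c = ((-1:R)^k) • !![1+x, y; z, 1+w] := by
  induction k with
  | zero => exact ⟨0,0,0,0, by simp, by simp, by simp, by simp, by
      simp [prodEta, Matrix.one_fin_two]⟩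
  | succ k ih =>
    obtain ⟨x,y,z,w,hx,hw,hy,hz,h⟩ := ih (fun i => c i.succ.succ) (fun i => hc _)
    have e : prodEta c = eta (c 0) * (eta (c (Fin.succ 0)) * prodEta (fun i : Fin (2*k) => c i.succ.succ)) := by
      rw [← prodEta_succ (n := 2*k) (fun i => c i.succ)]
      exact prodEta_succ (n := 2*k+1) c
    have ha := hc 0
    have hb := hc (Fin.succ 0)
    generalize c 0 = a at *
    generalize c (Fin.succ 0) = b at *
    have hab : a * b ∈ I^2 := by rw [pow_two]; exact Ideal.mul_mem_mul ha hb
    have haz : a * z ∈ I^2 := by rw [pow_two]; exact Ideal.mul_mem_mul ha hz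
    have hby : b * y ∈ I^2 := by rw [pow_two]; exact Ideal.mul_mem_mul hb hy
    refine ⟨x - a*b*(1+x) + a*z, y - a*b*y + a*(1+w), z - b*(1+x), w - b*y, ?_, ?_, ?_, ?_, ?_⟩
    · exact add_mem (sub_mem hx (Ideal.mul_mem_right _ _ hab)) haz
    · exact sub_mem hw hby
    · exact add_mem (sub_mem hy (Ideal.mul_mem_left _ _ hy)) (Ideal.mul_mem_right _ _ ha)
    · exact sub_mem hz (Ideal.mul_mem_right _ _ hb)
    · rw [e, h]
      ext i j; fin_cases i <;> fin_cases j <;> simp [eta, Matrix.mul_apply, pow_succ] <;> ring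

theorem prodEta_zero' (k : ℕ) : prodEta (fun _ : Fin (2*k) => (0:R)) = ((-1:R)^k) • 1 := by
  obtain ⟨x,y,z,w,hx,hw,hy,hz,h⟩ := prodEta_near (⊥ : Ideal R) k (fun _ => 0) (by simp)
  rw [pow_two, Ideal.bot_mul] at hx hw
  rw [Ideal.mem_bot] at hx hy hz hw
  subst hx hy hz hw
  rw [h, Matrix.one_fin_two, add_zero]

theorem interior_aux (k : ℕ) (c : Fin (2*k+2) → R) (ε : R) (he : ε * ε = 1)
    (h : prodEta c = ε • 1) (h0 : ∀ i : Fin (2*k+2), 0 < i.val → i.val + 1 < 2*k+2 → c i = 0) :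
    c = fun _ => 0 := by
  have e : (fun i : Fin (2*k) => c i.castSucc.succ) = fun _ => 0 := by
    funext i; apply h0 <;> simp
  rw [prodEta_succ, prodEta_castSucc, e, prodEta_zero'] at h
  have h01 := congrFun (congrFun h 0) 1
  have h10 := congrFun (congrFun h 1) 0
  have hs : ((-1:R)^k)*(-1)^k = 1 := by rw [← mul_pow]; simp
  simp [eta, Matrix.mul_apply] at h01 h10
  have l : ∀ x : R, (-1)^k * x = 0 → x = 0 := fun x hx => by
    linear_combination ((-1)^k) * hx - x * hs
  funext i
  by_cases hi : 0 < i.val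
  · by_cases hi' : i.val + 1 < 2*k+2
    · exact h0 i hi hi'
    · have : i = Fin.succ (Fin.last (2*k)) := by ext; simp; omega
      rw [this]; apply l; simpa using h10
  · have : i = 0 := Fin.ext (by rw [Fin.val_zero]; omega)
    rw [this]; exact h01

end helpers

section count
variable {R : Type*} [CommRing R] [Finite R] (I : Ideal R)

theorem card_fiber (q : R ⧸ I) : Nat.card {x : R // Ideal.Quotient.mk I x = q} = Nat.card I := by
  obtain ⟨a, rfl⟩ := Ideal.Quotient.mk_surjective q
  refine Nat.card_congr ⟨fun x => ⟨x.1 - a, Ideal.Quotient.eq.1 x.2⟩,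
    fun y => ⟨y.1 + a, Ideal.Quotient.eq.2 (by simp)⟩, fun x => by simp, fun y => by simp⟩

theorem card_lifts {m : ℕ} (q : Fin m → R ⧸ I) :
    Nat.card {d : Fin m → R // ∀ i, Ideal.Quotient.mk I (d i) = q i} = Nat.card I ^ m := by
  rw [Nat.card_congr (Equiv.subtypePiEquivPi (p := fun i x => Ideal.Quotient.mk I x = q i)),
    Nat.card_pi]
  simp [card_fiber]

theorem base (hu : ∀ x : R, x ∉ I → IsUnit x) {m : ℕ} (q : Fin (m+3) → R ⧸ I) (hq : q 1 ≠ 0)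
    (T : Matrix (Fin 2) (Fin 2) R) (hT : T.det = 1)
    (hTq : T.map (Ideal.Quotient.mk I) = prodEta q) :
    Nat.card {c : Fin (m+3) → R // (∀ i, Ideal.Quotient.mk I (c i) = q i) ∧ prodEta c = T} =
      Nat.card I ^ m := by
  rw [← card_lifts I (fun i : Fin m => q i.succ.succ.succ)]
  have hunit : ∀ x : R, Ideal.Quotient.mk I x = q 1 → IsUnit x := fun x hx => hu x (fun h => by
    apply hq; rw [← hx]; exact Ideal.Quotient.eq_zero_iff_mem.2 h)
  refine Nat.card_congr (Equiv.ofBijective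
    (fun c => ⟨fun i => c.1 i.succ.succ.succ, fun i => c.2.1 _⟩) ⟨?_, ?_⟩)
  · rintro ⟨c, hc, hcT⟩ ⟨c', hc', hcT'⟩ h
    simp only [Subtype.mk.injEq] at h ⊢
    rw [prodEta_three] at hcT hcT'
    rw [h] at hcT
    set M := prodEta fun i : Fin m => c' i.succ.succ.succ with hM
    have hMd : M.det = 1 := prodEta_det _
    have hMM : M * M.adjugate = 1 := by rw [Matrix.mul_adjugate, hMd, one_smul]
    have key : eta (c 0) * eta (c 1) * eta (c 2) = eta (c' 0) * eta (c' 1) * eta (c' 2) := by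
      have := congrArg (· * M.adjugate) (hcT.trans hcT'.symm)
      simpa [mul_assoc, hMM] using this
    rw [eta_three, eta_three] at key
    have h11 := congrFun (congrFun key 1) 1
    have h01 := congrFun (congrFun key 0) 1
    have h10 := congrFun (congrFun key 1) 0
    simp at h11 h01 h10
    rw [h11] at h01 h10
    have u := hunit (c' 1) (hc' 1)
    have e0 : c 0 = c' 0 := u.mul_right_cancel h01
    have e2 : c 2 = c' 2 := u.mul_left_cancel h10
    funext i
    refine Fin.cases e0 (fun i => Fin.cases h11 (fun i => Fin.cases e2 (fun i => ?_) i) i) i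
    exact congrFun h i
  · rintro ⟨d, hd⟩
    set M := prodEta d with hM
    have hMd : M.det = 1 := prodEta_det _
    have hMM : M.adjugate * M = 1 := by rw [Matrix.adjugate_mul, hMd, one_smul]
    have hMM' : M * M.adjugate = 1 := by rw [Matrix.mul_adjugate, hMd, one_smul]
    set T' := T * M.adjugate with hT'
    have hTd : T'.det = 1 := by
      have := congrArg Matrix.det hMM
      rw [Matrix.det_mul, hMd, mul_one, Matrix.det_one] at this
      rw [hT', Matrix.det_mul, hT, this, one_mul]
    have hTM : T' * M = T := by rw [hT', mul_assoc, hMM, mul_one]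
    have hred : T'.map (Ideal.Quotient.mk I) = eta (q 0) * eta (q 1) * eta (q 2) := by
      have e : M.map (Ideal.Quotient.mk I) = prodEta fun i : Fin m => q i.succ.succ.succ := by
        rw [hM, prodEta_map]; congr 1; funext i; exact hd i
      rw [hT', Matrix.map_mul, hTq, prodEta_three, ← e, mul_assoc, ← Matrix.map_mul, hMM']
      simp
    rw [eta_three] at hred
    have r11 := congrFun (congrFun hred 1) 1
    have r01 := congrFun (congrFun hred 0) 1
    have r10 := congrFun (congrFun hred 1) 0
    simp only [Matrix.map_apply, Matrix.of_apply, Matrix.cons_val', Matrix.cons_val_zero, Matrix.cons_val_one, Matrix.cons_val_fin_one] at r11 r01 r10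
    have uu : IsUnit (-T' 1 1) := hunit _ (by rw [map_neg, r11, neg_neg])
    obtain ⟨v, hv⟩ := isUnit_iff_exists_inv.1 uu
    have hvq : q 1 * Ideal.Quotient.mk I v = 1 := by
      have := congrArg (Ideal.Quotient.mk I) hv
      rwa [map_mul, map_neg, r11, neg_neg, map_one] at this
    rw [Matrix.det_fin_two] at hTd
    let c : Fin (m+3) → R := Fin.cons ((1 - T' 0 1) * v) (Fin.cons (-T' 1 1)
      (Fin.cons ((1 + T' 1 0) * v) d))
    refine ⟨⟨c, ?_, ?_⟩, ?_⟩
    · intro i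
      refine Fin.cases ?_ (fun i => Fin.cases ?_ (fun i => Fin.cases ?_ (fun i => ?_) i) i) i
      · change Ideal.Quotient.mk I ((1 - T' 0 1) * v) = q 0
        rw [map_mul, map_sub, map_one, r01]
        linear_combination q 0 * hvq
      · change Ideal.Quotient.mk I (-T' 1 1) = q 1
        rw [map_neg, r11, neg_neg]
      · change Ideal.Quotient.mk I ((1 + T' 1 0) * v) = q 2
        rw [map_mul, map_add, map_one, r10]
        linear_combination q 2 * hvq
      · exact hd i
    · rw [prodEta_three]
      change eta ((1 - T' 0 1) * v) * eta (-T' 1 1) * eta ((1 + T' 1 0) * v) * M = T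
      rw [← hTM, eta_three]
      congr 1
      ext i j; fin_cases i <;> fin_cases j
      · simp
        generalize T' 0 0 = t00 at *
        generalize T' 0 1 = t01 at *
        generalize T' 1 0 = t10 at *
        generalize T' 1 1 = t11 at *
        linear_combination (t00 + v * (1 - t01) * (1+t10)) * hv + v * hTd
      · simp
        linear_combination (T' 0 1 - 1) * hv
      · simp
        linear_combination (T' 1 0 + 1) * hv
      · simp
    · rfl

theorem lifts_count (hu : ∀ x : R, x ∉ I → IsUnit x) {m : ℕ} (q : Fin (m+3) → R ⧸ I)
    (i : Fin (m+3)) (h1 : 0 < i.val) (h2 : i.val + 1 < m + 3) (hq : q i ≠ 0)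
    (T : Matrix (Fin 2) (Fin 2) R) (hT : T.det = 1)
    (hTq : T.map (Ideal.Quotient.mk I) = prodEta q) :
    Nat.card {c : Fin (m+3) → R // (∀ i, Ideal.Quotient.mk I (c i) = q i) ∧ prodEta c = T} =
      Nat.card I ^ m := by
  induction m generalizing T with
  | zero =>
    have : i = 1 := by ext; simp; omega
    subst this
    exact base I hu q hq T hT hTq
  | succ m ih =>
    by_cases hi : i.val = 1
    · have : i = 1 := by ext; simp [hi]
      subst this
      exact base I hu q hq T hT hTq
    · obtain ⟨j, rfl⟩ : ∃ j : Fin (m+3), i = j.succ := ⟨i.pred (by intro h; simp [h] at h1), by simp⟩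
      rw [Fin.val_succ] at hi h1 h2
      have inv1 : ∀ a : R, (eta a).adjugate * eta a = 1 := fun a => by
        rw [Matrix.adjugate_mul, eta_det, one_smul]
      have inv2 : ∀ a : R, eta a * (eta a).adjugate = 1 := fun a => by
        rw [Matrix.mul_adjugate, eta_det, one_smul]
      have inv3 : ∀ a : R ⧸ I, (eta a).adjugate * eta a = 1 := fun a => by
        rw [Matrix.adjugate_mul, eta_det, one_smul]
      have key : ∀ a : {x : R // Ideal.Quotient.mk I x = q 0},
          Nat.card {c : Fin (m+3) → R // (∀ i, Ideal.Quotient.mk I (c i) = q i.succ) ∧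
            prodEta c = (eta a.1).adjugate * T} = Nat.card I ^ m := by
        intro a
        apply ih (fun i => q i.succ) j (by omega) (by omega) hq
        · have := congrArg Matrix.det (inv1 a.1)
          rw [Matrix.det_mul, eta_det, mul_one, Matrix.det_one] at this
          rw [Matrix.det_mul, this, hT, one_mul]
        · have e : (eta a.1).adjugate.map (Ideal.Quotient.mk I) = (eta (q 0)).adjugate := by
            obtain ⟨a, ha⟩ := a
            dsimp only
            rw [← ha]
            ext i j; fin_cases i <;> fin_cases j <;> simp [eta, Matrix.adjugate_fin_two]
          rw [Matrix.map_mul, e, hTq, prodEta_succ, ← mul_assoc, inv3, one_mul]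
      have eqv : {c : Fin (m+1+3) → R // (∀ i, Ideal.Quotient.mk I (c i) = q i) ∧ prodEta c = T} ≃
          Σ a : {x : R // Ideal.Quotient.mk I x = q 0},
            {c : Fin (m+3) → R // (∀ i, Ideal.Quotient.mk I (c i) = q i.succ) ∧
            prodEta c = (eta a.1).adjugate * T} :=
        { toFun := fun c => ⟨⟨c.1 0, c.2.1 0⟩, ⟨fun i => c.1 i.succ, fun i => c.2.1 _, by
            
            have h := c.2.2
            rw [prodEta_succ c.1] at h
            have h' := congrArg (fun X => (eta (c.1 0)).adjugate * X) h
            simp only [← mul_assoc, inv1, one_mul] at h'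
            exact h'⟩⟩
          invFun := fun s => ⟨Fin.cons s.1.1 s.2.1, fun i => by
              refine Fin.cases ?_ (fun i => ?_) i
              · exact s.1.2
              · exact s.2.2.1 i, by
              rw [prodEta_succ]
              change eta s.1.1 * prodEta s.2.1 = T
              rw [s.2.2.2, ← mul_assoc, inv2, one_mul]⟩
          left_inv := fun c => by
            apply Subtype.ext
            exact Fin.cons_self_tail c.1
          right_inv := fun s => rfl }
      rw [Nat.card_congr eqv]
      have := Fintype.ofFinite {x : R // Ideal.Quotient.mk I x = q 0}
      rw [Nat.card_sigma]
      simp_rw [key]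
      rw [Finset.sum_const, Finset.card_univ, ← Nat.card_eq_fintype_card, card_fiber, smul_eq_mul,
        pow_succ, mul_comm]

theorem total_sum (n : ℕ) (ε : R) :
    Nat.card {c : Fin n → R // prodEta c = ε • 1} =
      ∑ᶠ q : {q : Fin n → R ⧸ I // prodEta q = (Ideal.Quotient.mk I ε) • 1},
        Nat.card {c : Fin n → R // (∀ i, Ideal.Quotient.mk I (c i) = q.1 i) ∧ prodEta c = ε • 1} := by
  have hfin : Finite (R ⧸ I) := Finite.of_surjective _ Ideal.Quotient.mk_surjective
  have := Fintype.ofFinite {q : Fin n → R ⧸ I // prodEta q = (Ideal.Quotient.mk I ε) • 1}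
  rw [finsum_eq_sum_of_fintype, ← Nat.card_sigma]
  refine Nat.card_congr
    { toFun := fun c => ⟨⟨fun i => Ideal.Quotient.mk I (c.1 i), ?_⟩, ⟨c.1, fun i => rfl, c.2⟩⟩
      invFun := fun s => ⟨s.2.1, s.2.2.2⟩
      left_inv := fun c => rfl
      right_inv := ?_ }
  · rw [← prodEta_map, c.2]
    ext i j; fin_cases i <;> fin_cases j <;> simp
  · rintro ⟨⟨q, hq⟩, ⟨c, hc, hc'⟩⟩
    obtain rfl : (fun i => Ideal.Quotient.mk I (c i)) = q := funext hc
    rfl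

theorem fiber_nonzero (hu : ∀ x : R, x ∉ I → IsUnit x) (k : ℕ) (hk : 2 ≤ k) (ε : R)
    (he : ε * ε = 1) (q : Fin (2*k) → R ⧸ I) (hq : prodEta q = (Ideal.Quotient.mk I ε) • 1)
    (h0 : q ≠ fun _ => 0) :
    Nat.card {c : Fin (2*k) → R // (∀ i, Ideal.Quotient.mk I (c i) = q i) ∧ prodEta c = ε • 1} =
      Nat.card I ^ (2*k-3) := by
  have : ∃ i : Fin (2*k), 0 < i.val ∧ i.val + 1 < 2*k ∧ q i ≠ 0 := by
    by_contra hcon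
    push Not at hcon
    obtain ⟨k, rfl⟩ : ∃ l, k = l + 1 := ⟨k-1, by omega⟩
    exact h0 (interior_aux k q _ (by rw [← map_mul, he, map_one]) hq hcon)
  obtain ⟨i, h1, h2, h3⟩ := this
  have hm : Ideal.Quotient.mk I ε • (1 : Matrix (Fin 2) (Fin 2) (R ⧸ I)) =
      (ε • (1 : Matrix (Fin 2) (Fin 2) R)).map (Ideal.Quotient.mk I) := by
    ext i j; fin_cases i <;> fin_cases j <;> simp
  rw [hm] at hq
  have hd : (ε • (1 : Matrix (Fin 2) (Fin 2) R)).det = 1 := by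
    rw [Matrix.det_fin_two]; simp [he]
  generalize ε • (1 : Matrix (Fin 2) (Fin 2) R) = T at *
  obtain ⟨m, hm⟩ : ∃ m, 2*k = m+3 := ⟨2*k-3, by omega⟩
  generalize 2*k = n at *
  subst hm
  exact lifts_count I hu q i h1 h2 h3 T hd hq.symm

theorem total_ne (hu : ∀ x : R, x ∉ I → IsUnit x) (k : ℕ) (hk : 2 ≤ k) (ε : R)
    (he : ε * ε = 1) (h0 : Ideal.Quotient.mk I ε ≠ (-1)^k) :
    Nat.card {c : Fin (2*k) → R // prodEta c = ε • 1} =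
      Nat.card {q : Fin (2*k) → R ⧸ I // prodEta q = (Ideal.Quotient.mk I ε) • 1} *
       Nat.card I ^ (2*k-3) := by
  have hfin : Finite (R ⧸ I) := Finite.of_surjective _ Ideal.Quotient.mk_surjective
  have := Fintype.ofFinite {q : Fin (2*k) → R ⧸ I // prodEta q = (Ideal.Quotient.mk I ε) • 1}
  rw [total_sum I, finsum_eq_sum_of_fintype, Finset.sum_congr rfl
    (g := fun _ => Nat.card I ^ (2*k-3)), Finset.sum_const, Finset.card_univ,
    ← Nat.card_eq_fintype_card, smul_eq_mul]
  rintro ⟨q, hq⟩ -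
  apply fiber_nonzero I hu k hk ε he q hq
  rintro rfl
  rw [prodEta_zero'] at hq
  have := congrFun (congrFun hq 0) 0
  simp at this
  exact h0 this.symm

theorem total_eq (hu : ∀ x : R, x ∉ I → IsUnit x) (k : ℕ) (hk : 2 ≤ k) (ε : R)
    (he : ε * ε = 1) (h0 : Ideal.Quotient.mk I ε = (-1)^k) :
    Nat.card {c : Fin (2*k) → R // prodEta c = ε • 1} =
      (Nat.card {q : Fin (2*k) → R ⧸ I // prodEta q = (Ideal.Quotient.mk I ε) • 1} - 1) *
       Nat.card I ^ (2*k-3) +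
      Nat.card {c : Fin (2*k) → R // (∀ i, c i ∈ I) ∧ prodEta c = ε • 1} := by
  classical
  have hfin : Finite (R ⧸ I) := Finite.of_surjective _ Ideal.Quotient.mk_surjective
  have := Fintype.ofFinite {q : Fin (2*k) → R ⧸ I // prodEta q = (Ideal.Quotient.mk I ε) • 1}
  let z : {q : Fin (2*k) → R ⧸ I // prodEta q = (Ideal.Quotient.mk I ε) • 1} :=
    ⟨fun _ => 0, by rw [prodEta_zero', h0]⟩
  rw [total_sum I, finsum_eq_sum_of_fintype, ← Finset.sum_erase_add _ _ (Finset.mem_univ z),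
    Finset.sum_congr rfl
    (g := fun _ => Nat.card I ^ (2*k-3)), Finset.sum_const, Finset.card_erase_of_mem (Finset.mem_univ z), Finset.card_univ,
    ← Nat.card_eq_fintype_card, smul_eq_mul]
  · congr 1
    apply Nat.card_congr
    apply Equiv.subtypeEquivRight
    intro c
    simp only [z, Ideal.Quotient.eq_zero_iff_mem]
  · rintro ⟨q, hq⟩ hz
    apply fiber_nonzero I hu k hk ε he q hq
    rintro rfl
    exact (Finset.mem_erase.1 hz).1 rfl

end count

theorem card_span_p (p r : ℕ) (hp : p.Prime) (hr : 1 ≤ r) :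
    Nat.card (Ideal.span {(p : ZMod (p ^ r))}) = p ^ (r-1) := by
  have h : ∀ x : ZMod (p^r), x ∈ Ideal.span {(p : ZMod (p ^ r))} ↔
      x ∈ AddSubgroup.zmultiples (p : ZMod (p ^ r)) := by
    intro x
    rw [Ideal.mem_span_singleton', AddSubgroup.mem_zmultiples_iff]
    constructor
    · rintro ⟨a, rfl⟩
      obtain ⟨k, rfl⟩ := ZMod.intCast_surjective a
      exact ⟨k, by simp⟩
    · rintro ⟨k, rfl⟩
      exact ⟨k, by simp⟩
  have e : Nat.card (Ideal.span {(p : ZMod (p ^ r))}) =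
      Nat.card (AddSubgroup.zmultiples (p : ZMod (p ^ r))) :=
    Nat.card_congr (Equiv.subtypeEquivRight h)
  rw [e, Nat.card_zmultiples, ZMod.addOrderOf_coe _ (pow_ne_zero _ hp.ne_zero)]
  obtain ⟨s, rfl⟩ : ∃ s, r = s+1 := ⟨r-1, by omega⟩
  rw [pow_succ, Nat.gcd_mul_left_left, Nat.mul_div_cancel _ hp.pos]; simp

theorem unit_of_notMem (p r : ℕ) (hp : p.Prime) (x : ZMod (p^r))
    (hx : x ∉ Ideal.span {(p : ZMod (p ^ r))}) : IsUnit x := by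
  have hN : NeZero (p^r) := ⟨pow_ne_zero _ hp.ne_zero⟩
  obtain ⟨k, rfl⟩ := ZMod.natCast_zmod_surjective (n := p^r) x
  rw [ZMod.isUnit_iff_coprime]
  apply Nat.Coprime.pow_right
  rw [Nat.coprime_comm, hp.coprime_iff_not_dvd]
  rintro ⟨l, rfl⟩
  apply hx
  rw [Nat.cast_mul]
  exact Ideal.mul_mem_right _ _ (Ideal.mem_span_singleton_self _)

theorem dvd_of_mem (p r : ℕ) (hr : 1 ≤ r) (m : ℕ)
    (hx : (m : ZMod (p^r)) ∈ Ideal.span {(p : ZMod (p ^ r))}) : p ∣ m := by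
  rw [Ideal.mem_span_singleton'] at hx
  obtain ⟨a, ha⟩ := hx
  have := congrArg (ZMod.castHom (dvd_pow_self p (by omega : r ≠ 0)) (ZMod p)) ha
  rw [map_mul, map_natCast, map_natCast, ZMod.natCast_self, mul_zero] at this
  exact (ZMod.natCast_eq_zero_iff _ _).1 this.symm

/-- For `R = ℤ/p^rℤ` with maximal ideal `I = pR`, `n ≥ 4` even,
`ε ∈ {1, -1}`, `ω_n` the number of `ε`-quiddity cycles over `R/I` and
`σ` the number of tuples in `Iⁿ` with product `(-1)^(n/2)·Id`, the number of
`ε`-quiddity cycles of length `n` over `R` is as prescribed in the three cases. -/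
theorem stmt1 (p r : ℕ) (hp : p.Prime) (hr : 1 ≤ r) (n : ℕ) (hn : 4 ≤ n) (hne : Even n)
    (ε : ZMod (p ^ r)) (hε : ε = 1 ∨ ε = -1) :
    (ε = (-1) ^ (n / 2) →
      Nat.card {c : Fin n → ZMod (p ^ r) // prodEta c = ε • 1} =
        (Nat.card {c : Fin n → (ZMod (p ^ r) ⧸ Ideal.span {(p : ZMod (p ^ r))}) //
            prodEta c = (Ideal.Quotient.mk (Ideal.span {(p : ZMod (p ^ r))}) ε) • 1} - 1) *
          p ^ ((r - 1) * (n - 3)) +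
        Nat.card {c : Fin n → ZMod (p ^ r) //
            (∀ i, c i ∈ Ideal.span {(p : ZMod (p ^ r))}) ∧
            prodEta c = ((-1 : ZMod (p ^ r)) ^ (n / 2)) • 1}) ∧
    (ε = -(-1) ^ (n / 2) → 2 < p →
      Nat.card {c : Fin n → ZMod (p ^ r) // prodEta c = ε • 1} =
        Nat.card {c : Fin n → (ZMod (p ^ r) ⧸ Ideal.span {(p : ZMod (p ^ r))}) //
            prodEta c = (Ideal.Quotient.mk (Ideal.span {(p : ZMod (p ^ r))}) ε) • 1} *
          p ^ ((r - 1) * (n - 3))) ∧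
    (p = 2 → ε = -(-1) ^ (n / 2) → ε ≠ (-1) ^ (n / 2) →
      Nat.card {c : Fin n → ZMod (p ^ r) // prodEta c = ε • 1} =
        (Nat.card {c : Fin n → (ZMod (p ^ r) ⧸ Ideal.span {(p : ZMod (p ^ r))}) //
            prodEta c = (Ideal.Quotient.mk (Ideal.span {(p : ZMod (p ^ r))}) ε) • 1} - 1) *
          p ^ ((r - 1) * (n - 3))) := by
  have hu := unit_of_notMem p r hp
  have hc := card_span_p p r hp hr
  have hN : NeZero (p^r) := ⟨pow_ne_zero _ hp.ne_zero⟩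
  obtain ⟨k, rfl⟩ : ∃ k, n = 2*k := ⟨n/2, by obtain ⟨a, rfl⟩ := hne; omega⟩
  have hk : 2 ≤ k := by omega
  have hdiv : 2*k/2 = k := by omega
  have he : ε * ε = 1 := by rcases hε with rfl | rfl <;> simp
  have hsq : ((-1 : ZMod (p^r))^k) * (-1)^k = 1 := by rw [← mul_pow]; simp
  rw [hdiv, pow_mul, ← hc]
  refine ⟨?_, ?_, ?_⟩
  · intro h
    rw [total_eq _ hu k hk ε he (by rw [h]; simp), ← h]
  · intro h hp2
    apply total_ne _ hu k hk ε he
    intro h2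
    have h3 : Ideal.Quotient.mk (Ideal.span {(p : ZMod (p ^ r))}) ε =
      Ideal.Quotient.mk _ ((-1)^k) := by rw [h2]; simp
    rw [Ideal.Quotient.eq, h] at h3
    have h4 : ((2:ℕ) : ZMod (p^r)) ∈ Ideal.span {(p : ZMod (p ^ r))} := by
      have := Ideal.mul_mem_left _ (-(-1)^k) h3
      convert this using 1
      push_cast
      linear_combination -2 * hsq
    have := Nat.le_of_dvd (by norm_num) (dvd_of_mem p r hr 2 h4)
    omega
  · intro hp2 h hne'
    have hmem : (2 : ZMod (p^r)) ∈ Ideal.span {(p : ZMod (p ^ r))} := by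
      have := Ideal.mem_span_singleton_self (p : ZMod (p^r))
      have e : (p : ZMod (p^r)) = 2 := by rw [hp2]; simp
      rwa [e] at this ⊢
    rw [total_eq _ hu k hk ε he ?_]
    · rw [Nat.add_eq_left, Nat.card_eq_zero]
      left
      refine ⟨?_⟩
      rintro ⟨c, hcI, hcp⟩
      obtain ⟨x,y,z,w,hx,hw,hy,hz,e⟩ := prodEta_near _ k c hcI
      rw [hcp] at e
      have e0 := congrFun (congrFun e 0) 0
      simp at e0
      rw [Ideal.span_singleton_pow, Ideal.mem_span_singleton'] at hx
      obtain ⟨a, ha⟩ := hx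
      have e2 : (p : ZMod (p^r)) = 2 := by rw [hp2]; simp
      rw [e2] at ha
      have h2 : (2 : ZMod (p^r)) * (1 + 2 * a) = 0 := by
        rw [h] at e0
        linear_combination -(-1)^k * e0 - (2 + x) * hsq + ha
      have hun : IsUnit (1 + 2 * a) := by
        apply hu
        intro hm
        have h1 : ((1:ℕ) : ZMod (p^r)) ∈ Ideal.span {(p : ZMod (p ^ r))} := by
          have := sub_mem hm (Ideal.mul_mem_right a _ hmem)
          simpa using this
        have := dvd_of_mem p r hr 1 h1
        exact hp.one_lt.ne' (Nat.dvd_one.1 this)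
      have h20 : (2 : ZMod (p^r)) = 0 := by
        rwa [hun.mul_left_eq_zero] at h2
      apply hne'
      rw [h]
      linear_combination -(-1)^k * h20
    · have h3 : Ideal.Quotient.mk (Ideal.span {(p : ZMod (p ^ r))}) ε =
        Ideal.Quotient.mk _ ((-1)^k) := by
        rw [Ideal.Quotient.eq, h]
        have := Ideal.mul_mem_left _ (-(-1)^k) hmem
        convert this using 1
        ring
      rw [h3]; simp
end

section
/- Let n > 1 be odd, p a prime, and r ∈ ℕ_{≥1}. Then the number of tuples (c₁, …, cₙ) ∈ (ℤ/p^rℤ)ⁿ with [c₁, …, cₙ] = −Id equals p^{(n-3)(r-1)} · [(n-1)/2]_{p²}, where [m]_q := (q^m − 1)/(q − 1). -/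
open Matrix

/-- The q-integer `[m]_q = 1 + q + ⋯ + q^(m-1) = (q^m - 1)/(q - 1)`. -/
def qInt (m q : ℕ) : ℕ := ∑ i ∈ Finset.range m, q ^ i

section Aux

variable {R : Type*} [CommRing R] [Fintype R] [DecidableEq R]

/-- transfer count -/
def cntA : ℕ → R → R → ℕ
  | 0, x, y => if x = 1 ∧ y = 0 then 1 else 0
  | k + 1, x, y => ∑ c : R, cntA k y (c * y - x)

def cntS (k : ℕ) (x : R) : ℕ := ∑ y : R, cntA k x y

lemma cntA_succ (k : ℕ) (x y : R) : cntA (k+1) x y = ∑ c : R, cntA k y (c * y - x) := rfl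

lemma cntA_unit (k : ℕ) (x y : R) (hy : IsUnit y) : cntA (k+1) x y = cntS k y := by
  obtain ⟨u, rfl⟩ := hy
  rw [cntA_succ, cntS]
  refine Fintype.sum_equiv ((Units.mulRight u).trans (Equiv.subRight x)) _ _ ?_
  intro c
  simp

lemma cntS_total (k : ℕ) : ∑ x : R, cntS k x = Fintype.card R ^ k := by
  induction k with
  | zero =>
    simp [cntS, cntA, ite_and]
  | succ k ih =>
    simp only [cntS, cntA_succ]
    rw [Finset.sum_comm]
    have : ∀ y : R, ∑ x : R, ∑ c : R, cntA k y (c * y - x) = Fintype.card R * cntS k y := by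
      intro y
      rw [Finset.sum_comm]
      have : ∀ c : R, ∑ x : R, cntA k y (c * y - x) = cntS k y := by
        intro c
        exact Fintype.sum_equiv (Equiv.subLeft (c*y)) _ _ (fun x => by simp)
      simp [this]
    simp only [this]
    rw [← Finset.mul_sum, ih, pow_succ, mul_comm]

lemma cntA_scale (u : Rˣ) (j : ℕ) : (∀ x y : R, cntA (2*j) x (u*y) = cntA (2*j) x y) ∧
    (∀ x y : R, cntA (2*j+1) (u*x) y = cntA (2*j+1) x y) := by
  have step : ∀ k, (∀ x y : R, cntA k x (u*y) = cntA k x y) →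
      (∀ x y : R, cntA (k+1) (u*x) y = cntA (k+1) x y) := by
    intro k h x y
    rw [cntA_succ, cntA_succ]
    refine Fintype.sum_equiv (Units.mulLeft u⁻¹) _ _ ?_
    intro c
    refine Eq.trans ?_ (h _ _)
    congr 1
    simp [mul_sub, ← mul_assoc]
  have step2 : ∀ k, (∀ x y : R, cntA k (u*x) y = cntA k x y) →
      (∀ x y : R, cntA (k+1) x (u*y) = cntA (k+1) x y) := by
    intro k h x y
    rw [cntA_succ, cntA_succ]
    refine Fintype.sum_equiv (Units.mulRight u) _ _ ?_
    intro c
    rw [h]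
    congr 1
    simp [← mul_assoc]
  induction j with
  | zero =>
    have h0 : ∀ x y : R, cntA 0 x (u*y) = cntA 0 x y := by intro x y; simp [cntA]
    exact ⟨h0, step 0 h0⟩
  | succ j ih =>
    have h0 := step2 _ ih.2
    exact ⟨h0, step _ h0⟩

lemma cntS_scale (j : ℕ) (y : R) (hy : IsUnit y) : cntS (2*j+1) y = cntS (2*j+1) (1:R) := by
  obtain ⟨u, rfl⟩ := hy
  refine Finset.sum_congr rfl fun z _ => ?_
  have := (cntA_scale u j).2 1 z
  rwa [mul_one] at this

variable [IsLocalRing R]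

lemma cntA_zero (k : ℕ) (x y : R) (hx : ¬ IsUnit x) (hy : ¬ IsUnit y) : cntA k x y = 0 := by
  induction k generalizing x y with
  | zero =>
    have : x ≠ 1 := by rintro rfl; simp at hx
    simp [cntA, this]
  | succ k ih =>
    rw [cntA_succ]
    refine Finset.sum_eq_zero fun c _ => ih _ _ hy ?_
    rw [← mem_nonunits_iff, ← IsLocalRing.mem_maximalIdeal] at *
    exact Ideal.sub_mem _ (Ideal.mul_mem_left _ _ hy) hx

open Classical in
lemma cntS_rec (j U V : ℕ) (hU : (Finset.univ.filter fun x : R => IsUnit x).card = U)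
    (hV : (Finset.univ.filter fun x : R => ¬ IsUnit x).card = V) :
    cntS (2*j+3) (1:R) = (U+V)^(2*j+2) + V^2 * cntS (2*j+1) (1:R) := by
  have hN : Fintype.card R = U + V := by
    rw [← hU, ← hV, Finset.card_filter_add_card_filter_not, Finset.card_univ]
  have htot := cntS_total (R := R) (2*j+2)
  rw [← Finset.sum_filter_add_sum_filter_not _ (fun x : R => IsUnit x)] at htot
  have h1 : ∑ x : R with ¬ IsUnit x, cntS (2*j+2) x = V * (U * cntS (2*j+1) (1:R)) := by
    rw [← hV]
    refine Finset.sum_const_nat fun x hx => ?_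
    rw [Finset.mem_filter] at hx
    rw [cntS, ← Finset.sum_filter_add_sum_filter_not _ (fun x : R => IsUnit x)]
    rw [Finset.sum_eq_zero (s := Finset.univ.filter fun x : R => ¬ IsUnit x), add_zero,
      ← hU]
    · refine Finset.sum_const_nat fun y hy => ?_
      rw [Finset.mem_filter] at hy
      rw [cntA_unit _ _ _ hy.2, cntS_scale _ _ hy.2]
    · intro y hy
      rw [Finset.mem_filter] at hy
      exact cntA_zero _ _ _ hx.2 hy.2
  have h2 : cntS (2*j+3) (1:R) = ∑ x : R with IsUnit x, cntS (2*j+2) x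
      + V * ((U + V) * cntS (2*j+1) (1:R)) := by
    rw [cntS, ← Finset.sum_filter_add_sum_filter_not _ (fun x : R => IsUnit x)]
    congr 1
    · refine Finset.sum_congr rfl fun y hy => ?_
      rw [Finset.mem_filter] at hy
      rw [cntA_unit _ _ _ hy.2]
    · rw [← hN, ← hV]
      refine Finset.sum_const_nat fun y hy => ?_
      rw [Finset.mem_filter] at hy
      rw [cntA_succ, ← Finset.card_univ]
      refine Finset.sum_const_nat fun c _ => ?_
      have hu : IsUnit (c * y - 1) := by
        by_contra h
        have hy' := hy.2
        rw [← mem_nonunits_iff, ← IsLocalRing.mem_maximalIdeal] at h hy'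
        have := Ideal.sub_mem _ (Ideal.mul_mem_left _ c hy') h
        rw [sub_sub_cancel, IsLocalRing.mem_maximalIdeal] at this
        exact this isUnit_one
      rw [cntA_unit _ _ _ hu, cntS_scale _ _ hu]
  rw [h1, hN] at htot
  rw [h2, ← htot]
  ring

end Aux

section Link

variable {R : Type*} [CommRing R]

lemma prodEta_cons {k : ℕ} (a : R) (c : Fin k → R) :
    prodEta (Fin.cons a c : Fin (k+1) → R) = eta a * prodEta c := by
  simp [prodEta, List.ofFn_succ]

lemma det_prodEta {k : ℕ} (c : Fin k → R) : (prodEta c).det = 1 := by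
  induction k with
  | zero => simp [prodEta]
  | succ k ih =>
    rw [← Fin.cons_self_tail c, prodEta_cons, Matrix.det_mul, ih]
    simp [eta, Matrix.det_fin_two]

lemma card_eq_cntA [Fintype R] [DecidableEq R] (k : ℕ) (x y : R) :
    Nat.card {c : Fin k → R // prodEta c 0 0 = x ∧ prodEta c 1 0 = y} = cntA k x y := by
  induction k generalizing x y with
  | zero =>
    simp only [prodEta, cntA]
    by_cases h : x = 1 ∧ y = 0
    · obtain ⟨rfl, rfl⟩ := h
      simp
    · rw [if_neg h]
      have : IsEmpty {c : Fin 0 → R // (List.ofFn fun i => eta (c i)).prod 0 0 = x ∧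
          (List.ofFn fun i => eta (c i)).prod 1 0 = y} := by
        refine ⟨fun c => h ?_⟩
        have := c.2
        simp at this
        exact ⟨this.1.symm, this.2.symm⟩
      exact Nat.card_of_isEmpty
  | succ k ih =>
    rw [cntA_succ]
    simp only [← ih]
    rw [← Nat.card_sigma]
    refine Nat.card_congr ⟨fun c => ⟨c.1 0, Fin.tail c.1, ?_⟩,
      fun s => ⟨Fin.cons s.1 s.2.1, ?_⟩, ?_, ?_⟩
    · obtain ⟨c, h⟩ := c
      rw [← Fin.cons_self_tail c, prodEta_cons] at h
      simp [eta, Matrix.mul_apply, Fin.sum_univ_two] at h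
      obtain ⟨h1, h2⟩ := h
      refine ⟨h2, ?_⟩
      simp only
      rw [← h1, ← h2]; ring
    · obtain ⟨a, c, h1, h2⟩ := s
      rw [prodEta_cons]
      simp [eta, Matrix.mul_apply, Fin.sum_univ_two, h1, h2]
    · intro c; simp
    · rintro ⟨a, c, h⟩; rfl

lemma card_eq_cntS [Fintype R] [DecidableEq R] (k : ℕ) :
    Nat.card {c : Fin (k+2) → R // prodEta c = -1} = cntS k (1:R) := by
  rw [← cntA_unit k 0 1 isUnit_one, ← card_eq_cntA]
  refine Nat.card_congr ⟨fun c => ⟨Fin.tail c.1, ?_⟩,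
      fun s => ⟨Fin.cons (- prodEta s.1 1 1) s.1, ?_⟩, ?_, ?_⟩
  · obtain ⟨c, h⟩ := c
    rw [← Fin.cons_self_tail c, prodEta_cons] at h
    have h00 := congrFun (congrFun h 0) 0
    have h10 := congrFun (congrFun h 1) 0
    simp [eta, Matrix.mul_apply, Fin.sum_univ_two] at h00 h10
    rw [h10] at h00
    refine ⟨h10, ?_⟩
    simpa using h00
  · obtain ⟨c, h1, h2⟩ := s
    have hd := det_prodEta c
    rw [Matrix.det_fin_two, h1, h2] at hd
    have hd' : prodEta c 0 1 = -1 := by linear_combination -hd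
    rw [prodEta_cons]
    ext i j
    fin_cases i <;> fin_cases j <;>
      simp [eta, Matrix.mul_apply, Fin.sum_univ_two, h1, h2, hd']
  · rintro ⟨c, h⟩
    apply Subtype.ext
    have h' := h
    rw [← Fin.cons_self_tail c, prodEta_cons] at h
    have h01 := congrFun (congrFun h 0) 1
    have h11 := congrFun (congrFun h 1) 1
    simp [eta, Matrix.mul_apply, Fin.sum_univ_two] at h01 h11
    have : - prodEta (Fin.tail c) 1 1 = c 0 := by
      rw [h11] at h01; linear_combination h01
    simp only [this, Fin.cons_self_tail]
  · rintro ⟨c, h⟩; simp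

end Link

lemma zmod_local (p r : ℕ) (hp : p.Prime) (hr : 1 ≤ r) : IsLocalRing (ZMod (p^r)) := by
  have : Fact (1 < p^r) := ⟨Nat.one_lt_pow (by omega) hp.one_lt⟩
  have : Fact p.Prime := ⟨hp⟩
  exact IsLocalRing.of_surjective' (PadicInt.toZModPow (p := p) r)
    (ZMod.ringHom_surjective _)

/-- For odd `n > 1`, the number of tuples over `ℤ/p^rℤ` with
`[c₁, …, cₙ] = -Id` is `p^((n-3)(r-1)) · [(n-1)/2]_{p²}`. -/
theorem stmt2 (p r : ℕ) (hp : p.Prime) (hr : 1 ≤ r) (n : ℕ) (hn : 1 < n) (hodd : Odd n) :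
    Nat.card {c : Fin n → ZMod (p ^ r) // prodEta c = -1} =
      p ^ ((n - 3) * (r - 1)) * qInt ((n - 1) / 2) (p ^ 2) := by
  classical
  obtain ⟨j, rfl⟩ : ∃ j, n = (2*j+1)+2 := by
    obtain ⟨i, rfl⟩ := hodd
    exact ⟨i-1, by omega⟩
  obtain ⟨s, rfl⟩ : ∃ s, r = s + 1 := ⟨r-1, by omega⟩
  have := zmod_local p (s+1) hp hr
  have : NeZero (p^(s+1)) := ⟨pow_ne_zero _ hp.ne_zero⟩
  rw [card_eq_cntS]
  have e1 : 2*j+1+2-3 = 2*j := by omega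
  have e2 : (2*j+1+2-1)/2 = j+1 := by omega
  rw [e1, e2, Nat.add_sub_cancel]
  have hU : (Finset.univ.filter fun x : ZMod (p^(s+1)) => IsUnit x).card = p^s*(p-1) := by
    rw [← Nat.totient_prime_pow_succ hp, ← ZMod.card_units_eq_totient, ← Fintype.card_subtype]
    exact (Fintype.card_congr (Equiv.ofBijective
      (fun u : (ZMod (p^(s+1)))ˣ => (⟨u, u.isUnit⟩ : {x : ZMod (p^(s+1)) // IsUnit x}))
      ⟨fun u v h => Units.ext (congrArg Subtype.val h),
        fun x => ⟨x.2.unit, Subtype.ext x.2.unit_spec⟩⟩)).symm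
  have hUV : p^s*(p-1) + p^s = p^s*p := by
    obtain ⟨q, rfl⟩ : ∃ q, p = q+1 := ⟨p-1, by have := hp.pos; omega⟩
    simp; ring
  have hV : (Finset.univ.filter fun x : ZMod (p^(s+1)) => ¬ IsUnit x).card = p^s := by
    have h := Finset.card_filter_add_card_filter_not (s := Finset.univ) (fun x : ZMod (p^(s+1)) => IsUnit x)
    rw [hU, Finset.card_univ, ZMod.card] at h
    have h3 := pow_succ p s
    omega
  induction j with
  | zero =>
    have : cntS 1 (1 : ZMod (p^(s+1))) = 1 := by
      simp [cntS, cntA, ite_and, sub_eq_zero, Finset.filter_eq']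
    simp [this, qInt]
  | succ j ih =>
    have h := cntS_rec (R := ZMod (p^(s+1))) j _ _ hU hV
    have e3 : 2*(j+1)+1 = 2*j+3 := by ring
    rw [e3, h, ih (by omega) (by exact ⟨j+1, by ring⟩) (by omega) (by omega), hUV, qInt, qInt, Finset.sum_range_succ _ (j+1)]
    ring
end

section
/- Let R be a commutative ring and x, u, v, y ∈ R such that uv − 1 is a unit of R. Then [x, u, v, y] = [x + (1 − v)(uv − 1)⁻¹, uv − 1, y + (1 − u)(uv − 1)⁻¹]. Moreover, for all x, y ∈ R one has [x, 1, y] = [x − 1, y − 1]. -/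
open Matrix

/-- If `uv - 1` is a unit, then
`[x, u, v, y] = [x + (1-v)(uv-1)⁻¹, uv-1, y + (1-u)(uv-1)⁻¹]`; moreover
`[x, 1, y] = [x-1, y-1]` for all `x, y`. -/
theorem stmt4 {R : Type*} [CommRing R] :
    (∀ x u v y : R, IsUnit (u * v - 1) →
      prodEta ![x, u, v, y] =
        prodEta ![x + (1 - v) * Ring.inverse (u * v - 1), u * v - 1,
          y + (1 - u) * Ring.inverse (u * v - 1)]) ∧
    (∀ x y : R, prodEta ![x, 1, y] = prodEta ![x - 1, y - 1]) := by
  constructor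
  · intro x u v y h
    have hw := Ring.mul_inverse_cancel _ h
    generalize Ring.inverse (u * v - 1) = w at hw ⊢
    ext i j
    fin_cases i <;> fin_cases j <;>
      simp [prodEta, eta, List.ofFn_succ, Matrix.mul_apply, Fin.sum_univ_two] <;> grind
  · intro x y
    ext i j
    fin_cases i <;> fin_cases j <;>
      simp [prodEta, eta, List.ofFn_succ, Matrix.mul_apply, Fin.sum_univ_two] <;> ring
end

section
/- Let R be a commutative ring and c, u, v, b, d ∈ R with v a unit of R. Set x := v⁻¹·((vb − 1)(uv − 1) − 1), and assume that x is also a unit of R. Then [c, u, v, b, d] = [c − (vb − 2)·x⁻¹, x, d − (uv − 2)·x⁻¹]. -/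
open Matrix

/-- If `v` is a unit and `x := v⁻¹·((vb-1)(uv-1)-1)` is a unit, then
`[c, u, v, b, d] = [c - (vb-2)x⁻¹, x, d - (uv-2)x⁻¹]`. -/
theorem stmt5 {R : Type*} [CommRing R] (c u v b d : R) (hv : IsUnit v)
    (hx : IsUnit (Ring.inverse v * ((v * b - 1) * (u * v - 1) - 1))) :
    prodEta ![c, u, v, b, d] =
      prodEta ![c - (v * b - 2) * Ring.inverse (Ring.inverse v * ((v * b - 1) * (u * v - 1) - 1)),
        Ring.inverse v * ((v * b - 1) * (u * v - 1) - 1),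
        d - (u * v - 2) * Ring.inverse (Ring.inverse v * ((v * b - 1) * (u * v - 1) - 1))] := by
  have hxe : Ring.inverse v * ((v * b - 1) * (u * v - 1) - 1) = v * u * b - b - u := by
    have h := Ring.inverse_mul_cancel v hv
    linear_combination (v * u * b - b - u) * h
  rw [hxe] at hx ⊢
  have hy := Ring.mul_inverse_cancel _ hx
  generalize Ring.inverse (v * u * b - b - u) = y at hy ⊢
  -- the middle factor
  have hs : (v * b - 2) * y * (v * u * b - b - u) = v * b - 2 := by
    linear_combination (v * b - 2) * hy
  have ht : (u * v - 2) * y * (v * u * b - b - u) = u * v - 2 := by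
    linear_combination (u * v - 2) * hy
  have hst : (u * v - 2) * y * (v * b - 1) + (v * b - 2) * y = v := by
    linear_combination v * hy
  generalize hS : (v * b - 2) * y = S at *
  generalize hT : (u * v - 2) * y = T at *
  simp only [prodEta, List.ofFn_succ, List.ofFn_zero, List.prod_cons, List.prod_nil, mul_one, eta]
  ext i j
  fin_cases i <;> fin_cases j <;> simp [Matrix.mul_apply, Fin.sum_univ_two]
  · linear_combination c * ht + (d - T) * hs - hst
  · linear_combination -hs
  · linear_combination ht
  · ring
end

section
/- Let R be a finite commutative local ring with maximal ideal I, let z ∈ R be a unit, and let n ≥ 2. If there exists a tuple (c₁, …, cₙ) ∈ Iⁿ with [c₁, …, cₙ] = λ_z, then n is even and z ∈ (-1)^{n/2} + I. -/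
open Matrix

/-- In a finite commutative local ring `R` with maximal ideal `I`, if `z` is
a unit, `n ≥ 2`, and some tuple in `Iⁿ` has `[c₁, …, cₙ] = λ_z = diag(z, z⁻¹)`, then `n` is
even and `z ∈ (-1)^(n/2) + I`. -/
theorem stmt7 {R : Type*} [CommRing R] [IsLocalRing R] [Finite R]
    (z : R) (hz : IsUnit z) (n : ℕ) (hn : 2 ≤ n) (c : Fin n → R)
    (hc : ∀ i, c i ∈ IsLocalRing.maximalIdeal R)
    (h : prodEta c = !![z, 0; 0, Ring.inverse z]) :
    Even n ∧ z - (-1) ^ (n / 2) ∈ IsLocalRing.maximalIdeal R := by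
  set f := IsLocalRing.residue R with hf
  have key : (eta (0 : IsLocalRing.ResidueField R)) ^ n = (prodEta c).map f := by
    have h1 : (prodEta c).map f = f.mapMatrix (prodEta c) := rfl
    rw [h1, prodEta, map_list_prod, List.map_ofFn]
    have h2 : (f.mapMatrix ∘ fun i => eta (c i)) =
        fun _ : Fin n => eta (0 : IsLocalRing.ResidueField R) := by
      funext i
      have h3 : f (c i) = 0 := (IsLocalRing.residue_eq_zero_iff _).2 (hc i)
      ext a b
      fin_cases a <;> fin_cases b <;> simp [eta, h3]
    have h4 : ∀ g : Fin n → Matrix (Fin 2) (Fin 2) (IsLocalRing.ResidueField R),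
        g = (fun _ => eta 0) → (List.ofFn g).prod = eta 0 ^ n := by
      rintro g rfl
      simp [List.ofFn_const]
    exact (h4 _ h2).symm
  have sq : (eta (0 : IsLocalRing.ResidueField R)) ^ 2
      = (-1 : IsLocalRing.ResidueField R) • (1 : Matrix (Fin 2) (Fin 2) _) := by
    rw [pow_two]
    ext a b
    fin_cases a <;> fin_cases b <;> simp [eta, Matrix.mul_apply, Fin.sum_univ_two]
  rw [h] at key
  have hev : Even n := by
    by_contra hodd
    rw [Nat.not_even_iff_odd] at hodd
    obtain ⟨k, rfl⟩ := hodd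
    rw [pow_succ, pow_mul, sq, smul_pow, one_pow, smul_mul_assoc, one_mul] at key
    have := congrFun (congrFun key 1) 0
    simp [eta] at this
  refine ⟨hev, ?_⟩
  obtain ⟨k, rfl⟩ := hev
  rw [← two_mul, pow_mul, sq, smul_pow, one_pow] at key
  have := congrFun (congrFun key 0) 0
  simp at this
  have hk : (k + k) / 2 = k := by omega
  rw [hk, ← IsLocalRing.residue_eq_zero_iff, map_sub, map_pow, map_neg, map_one, sub_eq_zero]
  exact this.symm
end

section
/- Let R be a finite commutative local ring with maximal ideal I, let ε ∈ {1, -1} ⊆ R, let z ∈ ε + I (so z is a unit), and let n > 3 be even. Then |σ_{z,n}| = Σ_{x ∈ −ε+I} |σ_{x,n−2}| · |{(u, v) ∈ I × I : uv − 1 = x·z⁻¹}|, where the sum runs over all x in the coset −ε + I (all such x are units). -/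
open Matrix

namespace Stmt8Aux

variable {R : Type*} [CommRing R]

lemma prodEta_succ {m : ℕ} (c : Fin (m+1) → R) :
    prodEta c = eta (c 0) * prodEta (fun i : Fin m => c i.succ) := by
  simp [prodEta, List.ofFn_succ]

lemma prodEta_last {m : ℕ} (c : Fin (m+1) → R) :
    prodEta c = prodEta (fun i : Fin m => c i.castSucc) * eta (c (Fin.last m)) := by
  simp only [prodEta, List.ofFn_succ', List.concat_eq_append, List.prod_append, List.prod_singleton]

lemma prodEta_add_zero {m : ℕ} (c : Fin (m+1) → R) (t : R) :
    prodEta (c + Pi.single 0 t) = !![1, t; 0, 1] * prodEta c := by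
  rw [prodEta_succ, prodEta_succ c, ← mul_assoc]
  have h : (fun i : Fin m => (c + Pi.single 0 t : Fin (m+1) → R) i.succ) = fun i => c i.succ := by
    funext i
    simp [Pi.single_apply, Fin.succ_ne_zero]
  rw [h]
  congr 1
  ext i j
  fin_cases i <;> fin_cases j <;> simp [eta, Matrix.mul_apply, Fin.sum_univ_two]

lemma prodEta_add_last {m : ℕ} (c : Fin (m+1) → R) (s : R) :
    prodEta (c + Pi.single (Fin.last m) s) = prodEta c * !![1, 0; -s, 1] := by
  rw [prodEta_last, prodEta_last c, mul_assoc]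
  have h : (fun i : Fin m => (c + Pi.single (Fin.last m) s : Fin (m+1) → R) i.castSucc)
      = fun i => c i.castSucc := by
    funext i
    simp [Pi.single_apply, (Fin.castSucc_lt_last i).ne]
  rw [h]
  congr 1
  ext i j
  fin_cases i <;> fin_cases j <;> simp [eta, Matrix.mul_apply, Fin.sum_univ_two]

lemma prodEta_snoc2 {m : ℕ} (c : Fin m → R) (a b : R) :
    prodEta (Fin.snoc (Fin.snoc c a : Fin (m+1) → R) b : Fin (m+2) → R) =
      prodEta c * (eta a * eta b) := by
  rw [prodEta_last, prodEta_last]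
  simp [mul_assoc]

/-- the matrix equivalence -/
lemma key (P : Matrix (Fin 2) (Fin 2) R) (a b z y e : R) (hzy : z * y = 1)
    (he : (a * b - 1) * e = 1) :
    P * (eta a * eta b) = !![z, 0; 0, y] ↔
      !![1, -(a * z ^ 2 * e); 0, 1] * P * !![1, 0; b * e, 1] = !![z * e, 0; 0, (a*b-1) * y] := by
  have hA : eta a * eta b * !![-1, a; -b, a * b - 1] = 1 := by
    ext i j
    fin_cases i <;> fin_cases j <;> simp [eta, Matrix.mul_apply, Fin.sum_univ_two] <;> ring
  have hA' : !![-1, a; -b, a * b - 1] * (eta a * eta b) = 1 := by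
    ext i j
    fin_cases i <;> fin_cases j <;> simp [eta, Matrix.mul_apply, Fin.sum_univ_two] <;> ring
  have hU : !![1, (a * z ^ 2 * e); 0, 1] * !![1, -(a * z ^ 2 * e); 0, 1]
      = (1 : Matrix (Fin 2) (Fin 2) R) := by
    ext i j
    fin_cases i <;> fin_cases j <;> simp [Matrix.mul_apply, Fin.sum_univ_two]
  have hU' : !![1, -(a * z ^ 2 * e); 0, 1] * !![1, (a * z ^ 2 * e); 0, 1]
      = (1 : Matrix (Fin 2) (Fin 2) R) := by
    ext i j
    fin_cases i <;> fin_cases j <;> simp [Matrix.mul_apply, Fin.sum_univ_two]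
  have hL : !![1, 0; b * e, 1] * !![1, 0; -(b * e), 1]
      = (1 : Matrix (Fin 2) (Fin 2) R) := by
    ext i j
    fin_cases i <;> fin_cases j <;> simp [Matrix.mul_apply, Fin.sum_univ_two]
  have hL' : !![1, 0; -(b * e), 1] * !![1, 0; b * e, 1]
      = (1 : Matrix (Fin 2) (Fin 2) R) := by
    ext i j
    fin_cases i <;> fin_cases j <;> simp [Matrix.mul_apply, Fin.sum_univ_two]
  have hM : !![z, 0; 0, y] * !![-1, a; -b, a * b - 1] =
      !![1, (a * z ^ 2 * e); 0, 1] * !![z * e, 0; 0, (a*b-1) * y] * !![1, 0; -(b * e), 1] := by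
    ext i j
    fin_cases i <;> fin_cases j <;> simp [Matrix.mul_apply, Fin.sum_univ_two]
    · linear_combination (z + a * b * z * e) * he + (a * z * e ^ 2 * b * (a * b - 1)) * hzy
    · linear_combination (-a * z * z * y) * he - a * z * hzy
    · linear_combination (-b * y) * he
    · ring
  constructor
  · intro h
    have : P = !![z, 0; 0, y] * !![-1, a; -b, a * b - 1] := by
      rw [← h, mul_assoc, hA, mul_one]
    rw [this, hM]
    rw [← mul_assoc, ← mul_assoc, hU', one_mul, mul_assoc, hL', mul_one]
  · intro h
    have : P = !![z, 0; 0, y] * !![-1, a; -b, a * b - 1] := by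
      rw [hM, ← h]
      rw [← mul_assoc, ← mul_assoc, hU, one_mul, mul_assoc, hL, mul_one]
    rw [this, mul_assoc, hA', mul_one]

lemma key2 {m : ℕ} (c : Fin (m+1) → R) (a b z y e : R) (hzy : z * y = 1)
    (he : (a * b - 1) * e = 1) :
    prodEta (Fin.snoc (Fin.snoc c a : Fin (m+2) → R) b : Fin (m+3) → R) = !![z, 0; 0, y] ↔
      prodEta (c + Pi.single 0 (-(a * z ^ 2 * e)) + Pi.single (Fin.last m) (-(b * e)))
        = !![z * e, 0; 0, (a*b-1) * y] := by
  rw [prodEta_snoc2, key _ a b z y e hzy he, prodEta_add_last, prodEta_add_zero, neg_neg]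

lemma inv_eq {a b : R} (h : a * b = 1) : Ring.inverse a = b := by
  have hu : IsUnit a := IsUnit.of_mul_eq_one b h
  calc Ring.inverse a = Ring.inverse a * (a * b) := by rw [h, mul_one]
    _ = b := by rw [← mul_assoc, Ring.inverse_mul_cancel _ hu, one_mul]

lemma unit_aux [IsLocalRing R] {a b : R} (ha : a ∈ IsLocalRing.maximalIdeal R) :
    (a * b - 1) * Ring.inverse (a * b - 1) = 1 := by
  apply Ring.mul_inverse_cancel
  by_contra h
  have h1 : a * b - 1 ∈ IsLocalRing.maximalIdeal R := (IsLocalRing.mem_maximalIdeal _).2 h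
  have h2 : a * b ∈ IsLocalRing.maximalIdeal R := Ideal.mul_mem_right _ _ ha
  have h3 := Ideal.sub_mem _ h2 h1
  rw [sub_sub_cancel] at h3
  exact (Ideal.ne_top_iff_one _).1 (IsLocalRing.maximalIdeal.isMaximal R).ne_top h3

lemma mem_single [IsLocalRing R] {m : ℕ} {c : Fin m → R}
    (hc : ∀ i, c i ∈ IsLocalRing.maximalIdeal R)
    (j k : Fin m) {t s : R} (ht : t ∈ IsLocalRing.maximalIdeal R)
    (hs : s ∈ IsLocalRing.maximalIdeal R) (i : Fin m) :
    (c + Pi.single j t + Pi.single k s : Fin m → R) i ∈ IsLocalRing.maximalIdeal R := by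
  simp only [Pi.add_apply, Pi.single_apply]
  refine Ideal.add_mem _ (Ideal.add_mem _ (hc i) ?_) ?_ <;> split_ifs <;>
    first | assumption | exact Ideal.zero_mem _

lemma snoc2_mem [IsLocalRing R] {m : ℕ} {c : Fin m → R} {a b : R} :
    (∀ i, (Fin.snoc (Fin.snoc c a : Fin (m+1) → R) b : Fin (m+2) → R) i
      ∈ IsLocalRing.maximalIdeal R) ↔
    (∀ i, c i ∈ IsLocalRing.maximalIdeal R) ∧ a ∈ IsLocalRing.maximalIdeal R ∧
      b ∈ IsLocalRing.maximalIdeal R := by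
  simp [Fin.forall_fin_succ', and_assoc]

/-- step one: split off last two -/
lemma card1 [IsLocalRing R] (m : ℕ) (A : Matrix (Fin 2) (Fin 2) R) :
    Nat.card {c : Fin (m+2) → R // (∀ i, c i ∈ IsLocalRing.maximalIdeal R) ∧ prodEta c = A} =
    Nat.card {q : (Fin m → R) × (R × R) // ((∀ i, q.1 i ∈ IsLocalRing.maximalIdeal R) ∧
      q.2.1 ∈ IsLocalRing.maximalIdeal R ∧ q.2.2 ∈ IsLocalRing.maximalIdeal R) ∧
      prodEta (Fin.snoc (Fin.snoc q.1 q.2.1 : Fin (m+1) → R) q.2.2 : Fin (m+2) → R) = A} := by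
  symm
  refine Nat.card_congr (Equiv.subtypeEquiv
    { toFun := fun q => (Fin.snoc (Fin.snoc q.1 q.2.1 : Fin (m+1) → R) q.2.2 : Fin (m+2) → R)
      invFun := fun c => (fun i => c i.castSucc.castSucc,
        (c (Fin.last m).castSucc, c (Fin.last (m+1))))
      left_inv := fun q => by simp
      right_inv := fun c => by
        funext i
        refine Fin.lastCases ?_ (fun i => ?_) i
        · simp
        · refine Fin.lastCases ?_ (fun i => ?_) i <;> simp } ?_)
  intro q
  simp only [Equiv.coe_fn_mk, snoc2_mem]

lemma card2 [IsLocalRing R] (m : ℕ) (z y : R) (hzy : z * y = 1) :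
    Nat.card {q : (Fin (m+1) → R) × (R × R) // ((∀ i, q.1 i ∈ IsLocalRing.maximalIdeal R) ∧
      q.2.1 ∈ IsLocalRing.maximalIdeal R ∧ q.2.2 ∈ IsLocalRing.maximalIdeal R) ∧
      prodEta (Fin.snoc (Fin.snoc q.1 q.2.1 : Fin (m+2) → R) q.2.2 : Fin (m+3) → R)
        = !![z, 0; 0, y]} =
    Nat.card {q : (Fin (m+1) → R) × (R × R) // ((∀ i, q.1 i ∈ IsLocalRing.maximalIdeal R) ∧
      q.2.1 ∈ IsLocalRing.maximalIdeal R ∧ q.2.2 ∈ IsLocalRing.maximalIdeal R) ∧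
      prodEta q.1 = !![z * (q.2.1 * q.2.2 - 1), 0; 0, Ring.inverse (z * (q.2.1 * q.2.2 - 1))]} := by
  refine Nat.card_congr
    { toFun := fun q => ⟨(q.1.1 + Pi.single 0
            (-(q.1.2.1 * z ^ 2 * Ring.inverse (q.1.2.1 * q.1.2.2 - 1)))
          + Pi.single (Fin.last m) (-(q.1.2.2 * Ring.inverse (q.1.2.1 * q.1.2.2 - 1))),
          (q.1.2.1 * z ^ 2 * Ring.inverse (q.1.2.1 * q.1.2.2 - 1), q.1.2.2 * y ^ 2)), ?_⟩
      invFun := fun q => ⟨(q.1.1 + Pi.single 0 q.1.2.1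
          + Pi.single (Fin.last m) (z ^ 2 * q.1.2.2 * (q.1.2.1 * q.1.2.2 - 1) : R),
          (q.1.2.1 * y ^ 2 * Ring.inverse (q.1.2.1 * q.1.2.2 - 1), z ^ 2 * q.1.2.2)), ?_⟩
      left_inv := ?_
      right_inv := ?_ }
  · obtain ⟨⟨c, a, b⟩, ⟨hc, ha, hb⟩, h⟩ := q
    dsimp only at *
    have he := unit_aux (b := b) ha
    generalize Ring.inverse (a * b - 1) = e at *
    have hx : z * (a * z ^ 2 * e * (b * y ^ 2) - 1) = z * e := by
      linear_combination z * he + z * a * b * e * (z * y + 1) * hzy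
    refine ⟨⟨mem_single hc _ _ (neg_mem ?_) (neg_mem ?_), ?_, ?_⟩, ?_⟩
    · exact Ideal.mul_mem_right _ _ (Ideal.mul_mem_right _ _ ha)
    · exact Ideal.mul_mem_right _ _ hb
    · exact Ideal.mul_mem_right _ _ (Ideal.mul_mem_right _ _ ha)
    · exact Ideal.mul_mem_right _ _ hb
    · rw [hx, (key2 c a b z y e hzy he).1 h]
      rw [inv_eq (a := z * e) (b := (a*b-1)*y)]
      linear_combination he + (a*b-1)*e*hzy
  · obtain ⟨⟨d, u, v⟩, ⟨hc, ha, hb⟩, h⟩ := q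
    dsimp only at *
    have he := unit_aux (b := v) ha
    generalize Ring.inverse (u * v - 1) = g at *
    have hg : u * y ^ 2 * g * (z ^ 2 * v) - 1 = g := by
      linear_combination he + u * v * g * (z * y + 1) * hzy
    refine ⟨⟨mem_single hc _ _ ha ?_, ?_, ?_⟩, ?_⟩
    · exact Ideal.mul_mem_right _ _ (Ideal.mul_mem_left _ _ hb)
    · exact Ideal.mul_mem_right _ _ (Ideal.mul_mem_right _ _ ha)
    · exact Ideal.mul_mem_left _ _ hb
    · rw [key2 _ _ _ z y (u * v - 1) hzy (by rw [hg]; linear_combination he), hg]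
      have h1 : u * y ^ 2 * g * z ^ 2 * (u * v - 1) = u := by
        linear_combination u * he + u * g * (u * v - 1) * (z * y + 1) * hzy
      have h2 : d + Pi.single 0 u + Pi.single (Fin.last m) (z ^ 2 * v * (u * v - 1) : R)
         + Pi.single 0 (-(u * y ^ 2 * g * z ^ 2 * (u * v - 1)) : R)
         + Pi.single (Fin.last m) (-(z ^ 2 * v * (u * v - 1)) : R) = d := by
        rw [h1, Pi.single_neg, Pi.single_neg]; abel
      rw [h2, h, inv_eq (b := g * y)]
      linear_combination he + (u*v-1)*g*hzy
  · rintro ⟨⟨c, a, b⟩, ⟨hc, ha, hb⟩, h⟩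
    have he := unit_aux (b := b) ha
    apply Subtype.ext
    dsimp only at *
    generalize Ring.inverse (a * b - 1) = e at *
    have hx : a * z ^ 2 * e * (b * y ^ 2) - 1 = e := by
      linear_combination he + a * b * e * (z * y + 1) * hzy
    rw [hx, inv_eq (a := e) (b := a * b - 1) (by linear_combination he)]
    have h2 : z ^ 2 * (b * y ^ 2) = b := by linear_combination b * (z * y + 1) * hzy
    rw [h2]
    refine Prod.ext ?_ (Prod.ext ?_ rfl)
    · dsimp only
      rw [Pi.single_neg, Pi.single_neg]; abel
    · dsimp only
      linear_combination a * he + a * e * (a * b - 1) * (z * y + 1) * hzy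
  · rintro ⟨⟨d, u, v⟩, ⟨hc, ha, hb⟩, h⟩
    have he := unit_aux (b := v) ha
    apply Subtype.ext
    dsimp only at *
    generalize Ring.inverse (u * v - 1) = g at *
    have hg : u * y ^ 2 * g * (z ^ 2 * v) - 1 = g := by
      linear_combination he + u * v * g * (z * y + 1) * hzy
    rw [hg, inv_eq (a := g) (b := u * v - 1) (by linear_combination he)]
    have h1 : u * y ^ 2 * g * z ^ 2 * (u * v - 1) = u := by
      linear_combination u * he + u * g * (u * v - 1) * (z * y + 1) * hzy
    rw [h1]
    refine Prod.ext ?_ (Prod.ext rfl ?_)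
    · dsimp only
      rw [Pi.single_neg, Pi.single_neg]; abel
    · dsimp only
      linear_combination v * (z * y + 1) * hzy

end Stmt8Aux

open scoped Classical in
/-- For a finite commutative local ring `R` with maximal ideal `I`,
`ε ∈ {1,-1}`, `z ∈ ε + I`, and even `n > 3`:
`|σ_{z,n}| = Σ_{x ∈ -ε+I} |σ_{x,n-2}| · |{(u,v) ∈ I×I : uv - 1 = x·z⁻¹}|`. -/
theorem stmt8 {R : Type*} [CommRing R] [IsLocalRing R] [Fintype R]
    (ε : R) (hε : ε = 1 ∨ ε = -1) (z : R) (hz : z - ε ∈ IsLocalRing.maximalIdeal R)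
    (n : ℕ) (hn : 3 < n) (hne : Even n) :
    Nat.card {c : Fin n → R // (∀ i, c i ∈ IsLocalRing.maximalIdeal R) ∧
        prodEta c = !![z, 0; 0, Ring.inverse z]} =
      ∑ x ∈ Finset.univ.filter (fun x : R => x + ε ∈ IsLocalRing.maximalIdeal R),
        Nat.card {c : Fin (n - 2) → R // (∀ i, c i ∈ IsLocalRing.maximalIdeal R) ∧
            prodEta c = !![x, 0; 0, Ring.inverse x]} *
        Nat.card {uv : R × R // uv.1 ∈ IsLocalRing.maximalIdeal R ∧
            uv.2 ∈ IsLocalRing.maximalIdeal R ∧ uv.1 * uv.2 - 1 = x * Ring.inverse z} := by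
  obtain ⟨m, rfl⟩ : ∃ m, n = m + 1 + 2 := ⟨n - 3, by omega⟩
  have hzu : IsUnit z := by
    by_contra h
    have h1 : z ∈ IsLocalRing.maximalIdeal R := (IsLocalRing.mem_maximalIdeal _).2 h
    have h2 := Ideal.sub_mem _ h1 hz
    rw [sub_sub_cancel] at h2
    have h3 : IsUnit ε := by rcases hε with rfl | rfl <;> simp
    exact (IsLocalRing.mem_maximalIdeal _).1 h2 h3
  have hzy := Ring.mul_inverse_cancel z hzu
  rw [Stmt8Aux.card1, Stmt8Aux.card2 _ _ _ hzy]
  change _ = ∑ x ∈ _, Nat.card {c : Fin (m + 1) → R // _} * _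
  generalize Ring.inverse z = y at *
  rw [Nat.card_eq_fintype_card, Fintype.card_subtype]
  rw [Finset.card_eq_sum_card_fiberwise (f := fun q => z * (q.2.1 * q.2.2 - 1))
    (t := Finset.univ.filter (fun x : R => x + ε ∈ IsLocalRing.maximalIdeal R))]
  · refine Finset.sum_congr rfl fun x _ => ?_
    rw [Nat.card_eq_fintype_card, Fintype.card_subtype, Nat.card_eq_fintype_card,
      Fintype.card_subtype, ← Finset.card_product]
    congr 1
    ext ⟨d, u, v⟩
    have hx : u * v - 1 = x * y ↔ z * (u * v - 1) = x := by
      constructor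
      · intro h; rw [h]; linear_combination x * hzy
      · rintro rfl; linear_combination -(u * v - 1) * hzy
    simp only [Finset.mem_filter, Finset.mem_univ, true_and, Finset.mem_product, hx]
    constructor
    · rintro ⟨⟨⟨h1, h2, h3⟩, h4⟩, rfl⟩
      exact ⟨⟨h1, h4⟩, h2, h3, rfl⟩
    · rintro ⟨⟨h1, h4⟩, h2, h3, rfl⟩
      exact ⟨⟨⟨h1, h2, h3⟩, h4⟩, rfl⟩
  · rintro ⟨d, u, v⟩ hq
    simp only [Finset.coe_filter, Finset.mem_univ, true_and, Set.mem_setOf_eq] at hq ⊢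
    have h1 : z * (u * v - 1) + ε = z * v * u - (z - ε) := by ring
    rw [h1]
    exact Ideal.sub_mem _ (Ideal.mul_mem_left _ _ hq.1.2.1) hz
end

section
/- Let p be a prime, r ∈ ℕ_{≥1}, R = ℤ/p^rℤ with maximal ideal I = pR, and let a ∈ R be a non-unit. Set M := {(u, v) ∈ I × I : uv = a}. Then |M| = (r−1)p^r − (r−2)p^{r−1} if a = 0, and |M| = (p^r − p^{r−1})·(ν_p(a) − 1) if a ≠ 0. -/
open Matrix

open scoped Classical in
/-- `ν_p(a)`: the largest `k ∈ {0, …, r}` with `a ≡ 0 (mod p^k)`; in particular `ν_p(0) = r`. -/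
noncomputable def nuP (p r : ℕ) (a : ZMod (p ^ r)) : ℕ :=
  Nat.findGreatest (fun k => (p : ZMod (p ^ r)) ^ k ∣ a) r

theorem aux_zero {p r : ℕ} : (p : ZMod (p ^ r)) ^ r = 0 := by
  have := ZMod.natCast_self (p ^ r)
  push_cast at this
  exact this

theorem aux_pow_eq_zero {p r : ℕ} (hp : p.Prime) (m : ℕ) :
    (p : ZMod (p ^ r)) ^ m = 0 ↔ r ≤ m := by
  rw [← Nat.cast_pow, ZMod.natCast_eq_zero_iff, Nat.pow_dvd_pow_iff_le_right hp.one_lt]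

theorem aux_decomp {p r : ℕ} (hp : p.Prime) (x : ZMod (p ^ r)) :
    ∃ i, i ≤ r ∧ ∃ w, IsUnit w ∧ x = (p : ZMod (p ^ r)) ^ i * w := by
  haveI : NeZero (p ^ r) := ⟨pow_ne_zero _ hp.ne_zero⟩
  by_cases hx : x = 0
  · exact ⟨r, le_rfl, 1, isUnit_one, by simp [hx, aux_zero]⟩
  · have hn : x.val ≠ 0 := by simpa using hx
    obtain ⟨i, m, hm, h⟩ := Nat.exists_eq_pow_mul_and_not_dvd hn p hp.ne_one
    have hxe : x = (p : ZMod (p ^ r)) ^ i * (m : ZMod (p ^ r)) := by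
      rw [← ZMod.natCast_zmod_val x, h]; push_cast; rfl
    refine ⟨i, ?_, m, ?_, hxe⟩
    · by_contra hlt
      apply hx
      rw [hxe, (aux_pow_eq_zero hp i).2 (by omega), zero_mul]
    · rw [ZMod.isUnit_iff_coprime]
      exact (Nat.Coprime.pow_right _ ((Nat.Prime.coprime_iff_not_dvd hp).2 hm).symm)

theorem aux_dvd {p r : ℕ} (hp : p.Prime) {i j : ℕ} (hj : j ≤ r) {w : ZMod (p ^ r)}
    (hw : IsUnit w) : (p : ZMod (p ^ r)) ^ j ∣ (p : ZMod (p ^ r)) ^ i * w ↔ j ≤ i := by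
  rw [hw.dvd_mul_right]
  constructor
  · rintro ⟨c, hc⟩
    have h : (p : ZMod (p ^ r)) ^ (i + (r - j)) = 0 := by
      rw [pow_add, hc, mul_right_comm, ← pow_add, Nat.add_sub_cancel' hj, aux_zero, zero_mul]
    have := (aux_pow_eq_zero hp _).1 h
    omega
  · exact fun h => pow_dvd_pow _ h

theorem aux_nu {p r : ℕ} (hp : p.Prime) {i : ℕ} (hi : i ≤ r) {w : ZMod (p ^ r)}
    (hw : IsUnit w) : nuP p r ((p : ZMod (p ^ r)) ^ i * w) = i := by
  classical
  unfold nuP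
  rw [Nat.findGreatest_eq_iff]
  refine ⟨hi, fun _ => (aux_dvd hp hi hw).2 le_rfl, fun n h1 h2 h3 => ?_⟩
  have := (aux_dvd hp h2 hw).1 h3
  omega

theorem aux_spec {p r : ℕ} (hp : p.Prime) (x : ZMod (p ^ r)) :
    nuP p r x ≤ r ∧ ∃ w, IsUnit w ∧ x = (p : ZMod (p ^ r)) ^ (nuP p r x) * w := by
  obtain ⟨i, hi, w, hw, h⟩ := aux_decomp hp x
  have : nuP p r x = i := by rw [h]; exact aux_nu hp hi hw
  rw [this]
  exact ⟨hi, w, hw, h⟩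

theorem aux_le {p r : ℕ} (hp : p.Prime) {j : ℕ} (hj : j ≤ r) (x : ZMod (p ^ r)) :
    (p : ZMod (p ^ r)) ^ j ∣ x ↔ j ≤ nuP p r x := by
  obtain ⟨_, w, hw, h⟩ := aux_spec hp x
  conv_lhs => rw [h]
  exact aux_dvd hp hj hw

theorem aux_eq_zero {p r : ℕ} (hp : p.Prime) (x : ZMod (p ^ r)) :
    x = 0 ↔ nuP p r x = r := by
  have h := aux_le hp le_rfl x
  rw [aux_zero, zero_dvd_iff] at h
  rw [h]
  have := (aux_spec hp x).1
  omega

theorem aux_mul {p r : ℕ} (hp : p.Prime) (x y : ZMod (p ^ r)) :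
    nuP p r (x * y) = min r (nuP p r x + nuP p r y) := by
  obtain ⟨_, w, hw, h⟩ := aux_spec hp x
  obtain ⟨_, w', hw', h'⟩ := aux_spec hp y
  have e : x * y = (p : ZMod (p ^ r)) ^ (nuP p r x + nuP p r y) * (w * w') := by
    conv_lhs => rw [h, h']
    ring
  rcases le_total r (nuP p r x + nuP p r y) with hle | hle
  · rw [min_eq_left hle, ← aux_eq_zero hp, e, (aux_pow_eq_zero hp _).2 hle, zero_mul]
  · rw [min_eq_right hle, e]
    exact aux_nu hp hle (hw.mul hw')

theorem aux_card {p r : ℕ} (hp : p.Prime) {j : ℕ} (hj : j ≤ r) :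
    Nat.card {x : ZMod (p ^ r) // (p : ZMod (p ^ r)) ^ j ∣ x} = p ^ (r - j) := by
  have h0 : p ^ r ≠ 0 := pow_ne_zero _ hp.ne_zero
  haveI : NeZero (p ^ r) := ⟨h0⟩
  have e : ∀ x : ZMod (p ^ r), (p : ZMod (p ^ r)) ^ j ∣ x ↔
      x ∈ AddSubgroup.zmultiples ((p ^ j : ℕ) : ZMod (p ^ r)) := by
    intro x
    rw [AddSubgroup.mem_zmultiples_iff]
    constructor
    · rintro ⟨c, rfl⟩
      refine ⟨(c.val : ℤ), ?_⟩
      simp [mul_comm]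
    · rintro ⟨k, rfl⟩
      exact ⟨k, by simp [mul_comm]⟩
  rw [Nat.card_congr (Equiv.subtypeEquivRight e)]
  change Nat.card (AddSubgroup.zmultiples ((p ^ j : ℕ) : ZMod (p ^ r))) = _
  rw [Nat.card_zmultiples, ZMod.addOrderOf_coe _ h0, Nat.gcd_eq_right (pow_dvd_pow p hj),
    Nat.pow_div hj hp.pos]

theorem aux_cardnu {p r : ℕ} (hp : p.Prime) [Fintype (ZMod (p ^ r))] {i : ℕ} (hi : i < r) :
    ((Finset.univ.filter fun x : ZMod (p ^ r) => nuP p r x = i).card : ℤ)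
      = (p : ℤ) ^ (r - i) - (p : ℤ) ^ (r - i - 1) := by
  classical
  have h1 := aux_card hp hi.le
  have h2 := aux_card hp (Nat.succ_le_of_lt hi)
  rw [Nat.card_congr (Equiv.subtypeEquivRight (aux_le hp hi.le)), Nat.card_eq_fintype_card,
    Fintype.card_subtype] at h1
  rw [Nat.card_congr (Equiv.subtypeEquivRight (aux_le hp (Nat.succ_le_of_lt hi))),
    Nat.card_eq_fintype_card, Fintype.card_subtype] at h2
  have h3 : (Finset.univ.filter fun x : ZMod (p ^ r) => i ≤ nuP p r x).card
      = (Finset.univ.filter fun x : ZMod (p ^ r) => nuP p r x = i).card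
      + (Finset.univ.filter fun x : ZMod (p ^ r) => i.succ ≤ nuP p r x).card := by
    rw [← Finset.card_union_of_disjoint]
    · congr 1
      ext x
      simp only [Finset.mem_filter, Finset.mem_univ, true_and, Finset.mem_union]
      omega
    · rw [Finset.disjoint_filter]
      intro x _ h
      omega
  rw [h1, h2] at h3
  have h4 : r - i - 1 = r - i.succ := by omega
  rw [h4]
  have : ((p ^ (r - i) : ℕ) : ℤ) = _ := congrArg Nat.cast h3
  push_cast at this
  linarith

theorem aux_fib {p r : ℕ} (hp : p.Prime) (a u : ZMod (p ^ r)) (h : nuP p r u < nuP p r a) :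
    Nat.card {v : ZMod (p ^ r) // (p : ZMod (p ^ r)) ∣ v ∧ u * v = a} = p ^ (nuP p r u) := by
  obtain ⟨hk, w, hw, e⟩ := aux_spec hp a
  obtain ⟨hi, w', hw', e'⟩ := aux_spec hp u
  have h0 : ∃ v₀, u * v₀ = a := by
    obtain ⟨c, hc⟩ := (aux_le hp hi a).2 h.le
    obtain ⟨t, ht⟩ := hw'.exists_right_inv
    refine ⟨t * c, ?_⟩
    rw [e', hc]
    calc _ = (p : ZMod (p ^ r)) ^ nuP p r u * c * (w' * t) := by ring
      _ = _ := by rw [ht, mul_one]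
  obtain ⟨v₀, hv₀⟩ := h0
  have key : ∀ v, ((p : ZMod (p ^ r)) ∣ v ∧ u * v = a) ↔
      (p : ZMod (p ^ r)) ^ (r - nuP p r u) ∣ v - v₀ := by
    intro v
    have hz : u * (v - v₀) = 0 ↔ (p : ZMod (p ^ r)) ^ (r - nuP p r u) ∣ v - v₀ := by
      rw [aux_le hp (Nat.sub_le _ _), aux_eq_zero hp, aux_mul hp]
      omega
    rw [← hz, mul_sub, hv₀, sub_eq_zero]
    refine ⟨fun h => h.2, fun h' => ⟨?_, h'⟩⟩
    have := aux_mul hp u v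
    rw [h'] at this
    rw [← pow_one (p : ZMod (p ^ r)), aux_le hp (by omega)]
    omega
  have hc := aux_card hp (Nat.sub_le r (nuP p r u))
  rw [Nat.sub_sub_self hi] at hc
  rw [← hc]
  exact Nat.card_congr ((Equiv.subRight v₀).subtypeEquiv key)

theorem aux_count {p r : ℕ} (hp : p.Prime) (hr : 1 ≤ r) (a : ZMod (p ^ r)) (ha : ¬ IsUnit a) :
    (Nat.card {uv : ZMod (p ^ r) × ZMod (p ^ r) //
          uv.1 ∈ Ideal.span {(p : ZMod (p ^ r))} ∧ uv.2 ∈ Ideal.span {(p : ZMod (p ^ r))} ∧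
          uv.1 * uv.2 = a} : ℤ) =
        ((p : ℤ) ^ r - (p : ℤ) ^ (r - 1)) * ((nuP p r a : ℤ) - 1)
          + if a = 0 then (p : ℤ) ^ (r - 1) else 0 := by
  classical
  haveI : NeZero (p ^ r) := ⟨pow_ne_zero _ hp.ne_zero⟩
  obtain ⟨hk, w, hw, e⟩ := aux_spec hp a
  have hk1 : 1 ≤ nuP p r a := by
    by_contra h
    have h0 : nuP p r a = 0 := by omega
    rw [h0, pow_zero, one_mul] at e
    exact ha (e ▸ hw)
  have hdv : ∀ x : ZMod (p ^ r), (p : ZMod (p ^ r)) ∣ x ↔ 1 ≤ nuP p r x := by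
    intro x
    rw [← aux_le hp hr, pow_one]
  set k := nuP p r a with hkdef
  have E : {uv : ZMod (p ^ r) × ZMod (p ^ r) //
          uv.1 ∈ Ideal.span {(p : ZMod (p ^ r))} ∧ uv.2 ∈ Ideal.span {(p : ZMod (p ^ r))} ∧
          uv.1 * uv.2 = a} ≃
      Σ u : ZMod (p ^ r), {v : ZMod (p ^ r) // (p : ZMod (p ^ r)) ∣ u ∧
        (p : ZMod (p ^ r)) ∣ v ∧ u * v = a} :=
    { toFun := fun x => ⟨x.1.1, x.1.2, by
        have := x.2; simpa only [Ideal.mem_span_singleton] using this⟩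
      invFun := fun x => ⟨(x.1, x.2.1), by
        have := x.2.2; simpa only [Ideal.mem_span_singleton] using this⟩
      left_inv := fun _ => rfl
      right_inv := fun _ => rfl }
  let c : ℕ → ℤ := fun i => if 1 ≤ i ∧ i < k then (p : ℤ) ^ i else
    if i = r ∧ k = r then (p : ℤ) ^ (r - 1) else 0
  have hf : ∀ u : ZMod (p ^ r), (Nat.card {v : ZMod (p ^ r) // (p : ZMod (p ^ r)) ∣ u ∧
        (p : ZMod (p ^ r)) ∣ v ∧ u * v = a} : ℤ) = c (nuP p r u) := by
    intro u
    have hur := (aux_spec hp u).1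
    by_cases h1 : 1 ≤ nuP p r u
    · have hu := (hdv u).2 h1
      simp only [hu, true_and]
      by_cases h2 : nuP p r u < k
      · rw [aux_fib hp a u h2]
        simp [c, h1, h2]
      · by_cases h3 : k = r
        · have hu0 : u = 0 := (aux_eq_zero hp u).2 (by omega)
          have ha0 : a = 0 := (aux_eq_zero hp a).2 (by omega)
          have hc := aux_card hp hr
          simp only [pow_one] at hc
          have h4 : nuP p r u = r := by omega
          simp only [hu0, ha0, zero_mul, and_true]
          rw [hc, ← hu0, h4]
          simp [c, h3]
        · have : IsEmpty {v : ZMod (p ^ r) // (p : ZMod (p ^ r)) ∣ v ∧ u * v = a} := by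
            refine ⟨fun ⟨v, hv, hm⟩ => ?_⟩
            rw [hdv] at hv
            have := aux_mul hp u v
            rw [hm] at this
            omega
          rw [Nat.card_of_isEmpty]
          simp [c, h2, h3]
    · have hu : ¬ (p : ZMod (p ^ r)) ∣ u := fun h => h1 ((hdv u).1 h)
      have h5 : nuP p r u = 0 := by omega
      have h6 : (0 : ℕ) ≠ r := by omega
      simp [hu, c, h5, h6]
  rw [Nat.card_congr E, Nat.card_sigma]
  push_cast
  rw [Finset.sum_congr rfl (fun u _ => hf u)]
  rw [← Finset.sum_fiberwise_of_maps_to (s := Finset.univ) (t := Finset.range (r + 1))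
    (g := fun u => nuP p r u)
    (fun u _ => Finset.mem_range.2 (Nat.lt_succ_of_le (aux_spec hp u).1))]
  have hs : ∀ i ∈ Finset.range (r + 1),
      ∑ u ∈ Finset.univ.filter (fun u : ZMod (p ^ r) => nuP p r u = i), c (nuP p r u)
      = (if i ∈ Finset.Ico 1 k then ((p : ℤ) ^ r - (p : ℤ) ^ (r - 1)) else 0)
        + (if i = r then (if a = 0 then (p : ℤ) ^ (r - 1) else 0) else 0) := by
    intro i hi
    rw [Finset.mem_range] at hi
    rw [Finset.sum_congr rfl (g := fun _ => c i)
      (fun u hu => by rw [(Finset.mem_filter.1 hu).2]), Finset.sum_const, nsmul_eq_mul]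
    have ha0 : a = 0 ↔ k = r := aux_eq_zero hp a
    by_cases h1 : 1 ≤ i ∧ i < k
    · rw [aux_cardnu hp (by omega)]
      have h2 : i ≠ r := by omega
      simp only [c, h1, h2, Finset.mem_Ico, and_self, if_true, if_false, add_zero]
      rw [sub_mul, ← pow_add, ← pow_add]
      congr 2 <;> omega
    · by_cases h2 : i = r
      · have h3 : (Finset.univ.filter fun x : ZMod (p ^ r) => nuP p r x = i) = {0} := by
          ext x
          simp [h2, aux_eq_zero hp x]
        rw [h3]
        simp only [c, h1, h2, Finset.mem_Ico, ha0]
        simp only [h2] at h1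
        simp [h1]
      · simp [c, h1, h2]
  rw [Finset.sum_congr rfl hs, Finset.sum_add_distrib, ← Finset.sum_filter]
  congr 1
  · have : (Finset.range (r + 1)).filter (fun i => i ∈ Finset.Ico 1 k) = Finset.Ico 1 k := by
      ext i
      simp only [Finset.mem_filter, Finset.mem_range, Finset.mem_Ico]
      omega
    rw [this, Finset.sum_const, Nat.card_Ico, nsmul_eq_mul, Nat.cast_sub hk1]
    push_cast
    ring
  · simp

/-- For `R = ℤ/p^rℤ`, `I = pR`, and a non-unit `a ∈ R`, the number of pairs
`(u,v) ∈ I × I` with `uv = a` is `(r-1)p^r - (r-2)p^(r-1)` if `a = 0`, and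
`(p^r - p^(r-1))·(ν_p(a) - 1)` otherwise. -/
theorem stmt9 (p r : ℕ) (hp : p.Prime) (hr : 1 ≤ r) (a : ZMod (p ^ r)) (ha : ¬ IsUnit a) :
    (a = 0 →
      (Nat.card {uv : ZMod (p ^ r) × ZMod (p ^ r) //
          uv.1 ∈ Ideal.span {(p : ZMod (p ^ r))} ∧ uv.2 ∈ Ideal.span {(p : ZMod (p ^ r))} ∧
          uv.1 * uv.2 = a} : ℤ) =
        ((r : ℤ) - 1) * (p : ℤ) ^ r - ((r : ℤ) - 2) * (p : ℤ) ^ (r - 1)) ∧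
    (a ≠ 0 →
      (Nat.card {uv : ZMod (p ^ r) × ZMod (p ^ r) //
          uv.1 ∈ Ideal.span {(p : ZMod (p ^ r))} ∧ uv.2 ∈ Ideal.span {(p : ZMod (p ^ r))} ∧
          uv.1 * uv.2 = a} : ℤ) =
        ((p : ℤ) ^ r - (p : ℤ) ^ (r - 1)) * ((nuP p r a : ℤ) - 1)) := by
  have h := aux_count hp hr a ha
  constructor
  · intro h0
    rw [h, if_pos h0, (aux_eq_zero hp a).1 h0]
    ring
  · intro h0
    rw [h, if_neg h0, add_zero]
end

section
/- Let p be a prime, r ∈ ℕ_{≥1}, R = ℤ/p^rℤ with maximal ideal I = pR. Then for all ℓ ∈ {1, …, r}: σ_2(ℓ) = 1 if ℓ = r and σ_2(ℓ) = 0 otherwise; and σ_4(ℓ) = 0 if ℓ = 1 < r, σ_4(ℓ) = (ℓ−1)(p^r − p^{r−1}) if 1 < ℓ < r, and σ_4(r) = (r−1)p^r − (r−2)p^{r−1}. -/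
open Matrix

/-- `σ_n(ℓ) := |σ_{(-1)^(n/2)+p^ℓ, n}|`: the number of tuples `(c₁, …, cₙ) ∈ Iⁿ`
(`I = pR ⊆ R = ℤ/p^rℤ`) with `[c₁, …, cₙ] = diag(z, z⁻¹)` for `z = (-1)^(n/2) + p^ℓ`. -/
noncomputable def sigmaCount (p r n ℓ : ℕ) : ℕ :=
  Nat.card {c : Fin n → ZMod (p ^ r) //
    (∀ i, c i ∈ Ideal.span {(p : ZMod (p ^ r))}) ∧
    prodEta c = !![(-1) ^ (n / 2) + (p : ZMod (p ^ r)) ^ ℓ, 0;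
                   0, Ring.inverse ((-1) ^ (n / 2) + (p : ZMod (p ^ r)) ^ ℓ)]}


lemma aux_pr0 (p r k : ℕ) (h : r ≤ k) : (p : ZMod (p ^ r)) ^ k = 0 := by
  have : ((p ^ r : ℕ) : ZMod (p ^ r)) = 0 := ZMod.natCast_self _
  push_cast at this
  exact pow_eq_zero_of_le h this

lemma aux_pow_ne (p r k : ℕ) (hp : p.Prime) (h : k < r) : (p : ZMod (p ^ r)) ^ k ≠ 0 := by
  intro h0
  have h1 : ((p ^ k : ℕ) : ZMod (p ^ r)) = 0 := by push_cast; exact h0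
  rw [ZMod.natCast_eq_zero_iff, Nat.pow_dvd_pow_iff_le_right hp.one_lt] at h1
  omega

lemma aux_mul0 (p r v : ℕ) (hp : p.Prime) (h : v ≤ r) (x : ZMod (p ^ r)) :
    (p : ZMod (p ^ r)) ^ v * x = 0 ↔ (p : ZMod (p ^ r)) ^ (r - v) ∣ x := by
  haveI : NeZero (p ^ r) := ⟨pow_ne_zero _ hp.ne_zero⟩
  constructor
  · intro h0
    rw [← ZMod.natCast_zmod_val x] at h0 ⊢
    have h1 : ((p ^ v * x.val : ℕ) : ZMod (p ^ r)) = 0 := by push_cast at h0 ⊢; exact h0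
    rw [ZMod.natCast_eq_zero_iff] at h1
    have h2 : p ^ r = p ^ v * p ^ (r - v) := by rw [← pow_add]; congr 1; omega
    have h3 : p ^ v * p ^ (r - v) ∣ p ^ v * x.val := h2 ▸ h1
    have h4 := Nat.dvd_of_mul_dvd_mul_left (pow_pos hp.pos v) h3
    obtain ⟨y, hy⟩ := h4
    rw [hy]
    exact ⟨y, by push_cast; rfl⟩
  · rintro ⟨y, rfl⟩
    rw [← mul_assoc, ← pow_add, aux_pr0 p r _ (by omega), zero_mul]

lemma aux_unit (p r : ℕ) (hp : p.Prime) (x : ZMod (p ^ r))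
    (h : ¬ (p : ZMod (p ^ r)) ∣ x) : IsUnit x := by
  haveI : NeZero (p ^ r) := ⟨pow_ne_zero _ hp.ne_zero⟩
  rw [← ZMod.natCast_zmod_val x] at h ⊢
  rw [ZMod.isUnit_iff_coprime]
  apply Nat.Coprime.pow_right
  rw [Nat.coprime_comm, hp.coprime_iff_not_dvd]
  rintro ⟨y, hy⟩
  apply h
  rw [hy]
  exact ⟨y, by push_cast; rfl⟩

lemma aux_cardA (p r k : ℕ) (hp : p.Prime) (h : k ≤ r) :
    Nat.card {x : ZMod (p ^ r) // (p : ZMod (p ^ r)) ^ k ∣ x} = p ^ (r - k) := by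
  haveI : NeZero (p ^ r) := ⟨pow_ne_zero _ hp.ne_zero⟩
  have h2 : p ^ r = p ^ k * p ^ (r - k) := by rw [← pow_add]; congr 1; omega
  rw [← Nat.card_fin (p ^ (r - k))]
  symm
  refine Nat.card_congr (Equiv.ofBijective
    (fun j : Fin (p ^ (r - k)) => ⟨(p : ZMod (p ^ r)) ^ k * ((j : ℕ) : ZMod (p ^ r)),
      Dvd.intro _ rfl⟩) ⟨?_, ?_⟩)
  · intro i j hij
    have h1 := congrArg Subtype.val hij
    simp only at h1
    have h3 : ((p ^ k * (i : ℕ) : ℕ) : ZMod (p ^ r)) = ((p ^ k * (j : ℕ) : ℕ) : ZMod (p ^ r)) := by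
      push_cast; exact h1
    rw [ZMod.natCast_eq_natCast_iff] at h3
    have hk := pow_pos hp.pos k
    have h4 := Nat.ModEq.eq_of_lt_of_lt h3
      (by rw [h2]; exact Nat.mul_lt_mul_of_pos_left i.2 hk)
      (by rw [h2]; exact Nat.mul_lt_mul_of_pos_left j.2 hk)
    exact Fin.ext (Nat.eq_of_mul_eq_mul_left hk h4)
  · rintro ⟨x, y, rfl⟩
    refine ⟨⟨y.val % p ^ (r - k), Nat.mod_lt _ (pow_pos hp.pos _)⟩, ?_⟩
    apply Subtype.ext
    simp only
    conv_rhs => rw [← ZMod.natCast_zmod_val y, ← Nat.mod_add_div y.val (p ^ (r - k))]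
    push_cast
    rw [mul_add, ← mul_assoc ((p : ZMod (p ^ r)) ^ k) (_ ^ _), ← pow_add,
      aux_pr0 p r (k + (r - k)) (by omega)]
    ring

/-- number of `b ∈ I` with `b c = p^ℓ` -/
noncomputable def auxG (p r ℓ : ℕ) (c : ZMod (p ^ r)) : ℕ :=
  Nat.card {b : ZMod (p ^ r) // (p : ZMod (p ^ r)) ∣ b ∧ b * c = (p : ZMod (p ^ r)) ^ ℓ}

lemma aux_G1 (p r ℓ v : ℕ) (hp : p.Prime) (hv : v < ℓ) (hl : ℓ ≤ r)
    (c : ZMod (p ^ r)) (h1 : (p : ZMod (p ^ r)) ^ v ∣ c) (h2 : ¬ (p : ZMod (p ^ r)) ^ (v + 1) ∣ c) :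
    auxG p r ℓ c = p ^ v := by
  obtain ⟨x, rfl⟩ := h1
  have hx : IsUnit x := by
    apply aux_unit p r hp
    rintro ⟨y, rfl⟩
    exact h2 ⟨y, by ring⟩
  obtain ⟨u, rfl⟩ := hx
  have hA := aux_cardA p r (r - v) hp (by omega)
  rw [show r - (r - v) = v by omega] at hA
  rw [← hA, auxG]
  have hpl : (p : ZMod (p ^ r)) ^ ℓ = (p : ZMod (p ^ r)) ^ v * (p : ZMod (p ^ r)) ^ (ℓ - v) := by
    rw [← pow_add]; congr 1; omega
  set t : ZMod (p ^ r) := (↑u⁻¹ : ZMod (p ^ r)) * (p : ZMod (p ^ r)) ^ (ℓ - v) with ht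
  have hut : (u : ZMod (p ^ r)) * t = (p : ZMod (p ^ r)) ^ (ℓ - v) := by
    rw [ht, Units.mul_inv_cancel_left]
  have hpt : (p : ZMod (p ^ r)) ∣ t := Dvd.dvd.mul_left (dvd_pow_self _ (by omega)) _
  refine Nat.card_congr (Equiv.subtypeEquiv (Equiv.subRight t) ?_)
  intro b
  simp only [Equiv.subRight_apply]
  rw [← aux_mul0 p r v hp (by omega)]
  constructor
  · rintro ⟨-, hb⟩
    have : (u : ZMod (p ^ r)) * ((p : ZMod (p ^ r)) ^ v * (b - t)) = 0 := by
      rw [hpl] at hb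
      linear_combination hb - (p : ZMod (p ^ r)) ^ v * hut
    exact (Units.mul_right_eq_zero u).1 this
  · intro hb
    refine ⟨?_, ?_⟩
    · rw [aux_mul0 p r v hp (by omega)] at hb
      have h3 : (p : ZMod (p ^ r)) ∣ b - t := (dvd_pow_self _ (by omega)).trans hb
      simpa using dvd_add h3 hpt
    · rw [hpl]
      linear_combination (u : ZMod (p ^ r)) * hb + (p : ZMod (p ^ r)) ^ v * hut

lemma aux_G2 (p r ℓ : ℕ) (hp : p.Prime) (hl : ℓ < r)
    (c : ZMod (p ^ r)) (h1 : (p : ZMod (p ^ r)) ^ ℓ ∣ c) : auxG p r ℓ c = 0 := by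
  rw [auxG, Nat.card_eq_zero]
  left
  constructor
  rintro ⟨b, ⟨y, rfl⟩, hb⟩
  obtain ⟨x, rfl⟩ := h1
  have hn : IsNilpotent ((p : ZMod (p ^ r)) * (y * x)) :=
    ⟨r, by rw [mul_pow, aux_pr0 p r r le_rfl, zero_mul]⟩
  have hu := hn.isUnit_one_sub
  have h0 : (p : ZMod (p ^ r)) ^ ℓ * (1 - (p : ZMod (p ^ r)) * (y * x)) = 0 := by
    linear_combination -hb
  exact aux_pow_ne p r ℓ hp hl ((IsUnit.mul_left_eq_zero hu).1 h0)

lemma aux_G3 (p r : ℕ) (hp : p.Prime) (hr : 1 ≤ r) : auxG p r r 0 = p ^ (r - 1) := by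
  rw [auxG, ← aux_cardA p r 1 hp hr]
  refine Nat.card_congr (Equiv.subtypeEquivRight fun b => ?_)
  simp [aux_pr0 p r r le_rfl]

open Classical in
lemma aux_sum (p r ℓ : ℕ) [NeZero (p ^ r)] (hp : p.Prime) (hl : ℓ ≤ r) (m : ℕ) (hm : m + 1 ≤ ℓ) :
    ((∑ c : ZMod (p ^ r) with (p : ZMod (p ^ r)) ^ 1 ∣ c, auxG p r ℓ c : ℕ) : ℤ) =
    ((∑ c : ZMod (p ^ r) with (p : ZMod (p ^ r)) ^ (m + 1) ∣ c, auxG p r ℓ c : ℕ) : ℤ) +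
      m * ((p : ℤ) ^ r - (p : ℤ) ^ (r - 1)) := by
  induction m with
  | zero => simp
  | succ m ih =>
    rw [ih (by omega)]
    have hcard : ∀ k, k ≤ r → (Finset.univ.filter fun c : ZMod (p ^ r) =>
        (p : ZMod (p ^ r)) ^ k ∣ c).card = p ^ (r - k) := by
      intro k hk
      rw [← aux_cardA p r k hp hk, Nat.card_eq_fintype_card, Fintype.card_subtype]
    have hsub : (Finset.univ.filter fun c : ZMod (p ^ r) => (p : ZMod (p ^ r)) ^ (m + 1 + 1) ∣ c) ⊆
        (Finset.univ.filter fun c : ZMod (p ^ r) => (p : ZMod (p ^ r)) ^ (m + 1) ∣ c) := by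
      intro c hc
      simp only [Finset.mem_filter, Finset.mem_univ, true_and] at hc ⊢
      exact (pow_dvd_pow _ (by omega)).trans hc
    have hc2 := Finset.card_sdiff_add_card_eq_card hsub
    rw [hcard _ (by omega), hcard _ (by omega)] at hc2
    rw [← Finset.sum_sdiff hsub, Finset.sum_congr rfl (g := fun _ => p ^ (m + 1))]
    · rw [Finset.sum_const, smul_eq_mul]
      have e1 : (p : ℤ) ^ r = p ^ (r - (m + 1)) * p ^ (m + 1) := by
        rw [← pow_add]; congr 1; omega
      have e2 : (p : ℤ) ^ (r - 1) = p ^ (r - (m + 1 + 1)) * p ^ (m + 1) := by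
        rw [← pow_add]; congr 1; omega
      zify at hc2
      rw [e1, e2]
      push_cast
      linear_combination (p : ℤ) ^ (m + 1) * hc2
    · intro c hc
      simp only [Finset.mem_sdiff, Finset.mem_filter, Finset.mem_univ, true_and] at hc
      exact aux_G1 p r ℓ (m + 1) hp (by omega) hl c hc.1 hc.2

lemma aux_prod2 {R : Type*} [CommRing R] (c : Fin 2 → R) :
    prodEta c = !![c 0 * c 1 - 1, - c 0; c 1, -1] := by
  simp [prodEta, eta, List.ofFn_succ, Matrix.mul_fin_two]
  ring

lemma aux_prod4 {R : Type*} [CommRing R] (c : Fin 4 → R) :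
    prodEta c = !![(c 0 * c 1 - 1) * (c 2 * c 3 - 1) - c 0 * c 3, -(c 0 * c 1 - 1) * c 2 + c 0;
      c 1 * (c 2 * c 3 - 1) - c 3, - (c 1 * c 2) + 1] := by
  have : prodEta c = eta (c 0) * eta (c 1) * (eta (c 2) * eta (c 3)) := by
    simp [prodEta, List.ofFn_succ, Matrix.mul_assoc]
  rw [this]
  simp only [eta, Matrix.mul_fin_two]
  congr 1
  ext i j
  fin_cases i <;> fin_cases j <;> simp <;> ring

lemma aux_ext {R : Type*} (a b c d a' b' c' d' : R) :
    (!![a, b; c, d] = !![a', b'; c', d']) ↔ a = a' ∧ b = b' ∧ c = c' ∧ d = d' := by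
  constructor
  · intro h
    exact ⟨congrFun (congrFun h 0) 0, congrFun (congrFun h 0) 1, congrFun (congrFun h 1) 0,
      congrFun (congrFun h 1) 1⟩
  · rintro ⟨rfl, rfl, rfl, rfl⟩; rfl

open Classical in
lemma aux_sigma4 (p r ℓ : ℕ) [NeZero (p ^ r)] (hl : 1 ≤ ℓ) :
    sigmaCount p r 4 ℓ =
      ∑ c : ZMod (p ^ r) with (p : ZMod (p ^ r)) ^ 1 ∣ c, auxG p r ℓ c := by
  have h1 : (∑ c : ZMod (p ^ r) with (p : ZMod (p ^ r)) ^ 1 ∣ c, auxG p r ℓ c) =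
      Nat.card (Σ c : {c : ZMod (p ^ r) // (p : ZMod (p ^ r)) ^ 1 ∣ c},
        {b : ZMod (p ^ r) // (p : ZMod (p ^ r)) ∣ b ∧ b * c.1 = (p : ZMod (p ^ r)) ^ ℓ}) := by
    rw [Nat.card_sigma]
    exact (Finset.sum_subtype _ (by simp) _)
  rw [h1, sigmaCount]
  set P : ZMod (p ^ r) := (p : ZMod (p ^ r)) with hP
  have hz : ((-1 : ZMod (p ^ r)) ^ (4 / 2) + P ^ ℓ) = 1 + P ^ ℓ := by norm_num
  rw [hz]
  have hu : IsUnit (1 + P ^ ℓ) := by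
    apply IsNilpotent.isUnit_one_add
    exact ⟨r, by rw [← pow_mul]; exact aux_pr0 p r _ (Nat.le_mul_of_pos_left r hl)⟩
  have hzw := Ring.mul_inverse_cancel _ hu
  set w := Ring.inverse (1 + P ^ ℓ) with hw
  refine Nat.card_congr ⟨fun c => ⟨⟨c.1 2 * (1 + P ^ ℓ), ?_⟩, ⟨c.1 1, ?_, ?_⟩⟩,
    fun x => ⟨![- x.1.1, x.2.1, x.1.1 * w, - x.2.1 * (1 + P ^ ℓ)], ?_, ?_⟩, ?_, ?_⟩
  · have := Ideal.mem_span_singleton.1 (c.2.1 2)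
    rw [pow_one]; exact this.mul_right _
  · exact Ideal.mem_span_singleton.1 (c.2.1 1)
  · have h := c.2.2
    rw [aux_prod4, aux_ext] at h
    linear_combination -(1 + P ^ ℓ) * h.2.2.2 - hzw
  · obtain ⟨⟨c, hc⟩, b, hb, h⟩ := x
    rw [pow_one] at hc
    intro i
    rw [Ideal.mem_span_singleton]
    fin_cases i
    · simpa using hc
    · simpa using hb
    · simpa using hc.mul_right w
    · simpa using hb.mul_right (1 + P ^ ℓ)
  · obtain ⟨⟨c, hc⟩, b, hb, h⟩ := x
    simp only at h
    rw [aux_prod4, aux_ext]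
    simp only [Matrix.cons_val]
    generalize P ^ ℓ = q at *
    clear_value w
    subst h
    refine ⟨?_, ?_, ?_, ?_⟩
    · linear_combination (b * c + b * c * b * c) * hzw
    · linear_combination c * hzw
    · linear_combination (-b * b * c) * hzw
    · linear_combination -hzw
  · rintro ⟨c, hI, h⟩
    rw [aux_prod4, aux_ext] at h
    obtain ⟨h00, h01, h10, h11⟩ := h
    have e0 : -(c 2 * (1 + P ^ ℓ)) = c 0 := by
      linear_combination (-(1 + P ^ ℓ)) * h01 + c 0 * (1 + P ^ ℓ) * h11 + c 0 * hzw
    have e2 : c 2 * (1 + P ^ ℓ) * w = c 2 := by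
      linear_combination c 2 * hzw
    have e3 : -(c 1) * (1 + P ^ ℓ) = c 3 := by
      linear_combination (1 + P ^ ℓ) * h10 + c 3 * (1 + P ^ ℓ) * h11 + c 3 * hzw
    apply Subtype.ext
    change ![-(c 2 * (1 + P ^ ℓ)), c 1, c 2 * (1 + P ^ ℓ) * w, -(c 1) * (1 + P ^ ℓ)] = c
    rw [e0, e2, e3]
    funext i
    fin_cases i <;> rfl
  · rintro ⟨⟨c, hc⟩, b, hb, h⟩
    have e : c * w * (1 + P ^ ℓ) = c := by linear_combination c * hzw
    simp only [Matrix.cons_val]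
    have key : ∀ (c c' : {c : ZMod (p ^ r) // P ^ 1 ∣ c})
      (b : {b : ZMod (p ^ r) // P ∣ b ∧ b * c.1 = P ^ ℓ})
      (b' : {b : ZMod (p ^ r) // P ∣ b ∧ b * c'.1 = P ^ ℓ}), c = c' → b.1 = b'.1 →
      (⟨c, b⟩ : Σ c : {c : ZMod (p ^ r) // P ^ 1 ∣ c},
        {b : ZMod (p ^ r) // P ∣ b ∧ b * c.1 = P ^ ℓ}) = ⟨c', b'⟩ := by
      rintro c c' b b' rfl hb
      rw [Subtype.ext hb]
    exact key _ _ _ _ (Subtype.ext e) rfl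

lemma aux_sigma2 (p r ℓ : ℕ) (hp : p.Prime) (hl : ℓ ≤ r) :
    sigmaCount p r 2 ℓ = if ℓ = r then 1 else 0 := by
  rw [sigmaCount]
  simp only [aux_prod2, aux_ext]
  split_ifs with h
  · subst h
    rw [Nat.card_eq_one_iff_unique]
    refine ⟨⟨?_⟩, ⟨0, ?_, ?_⟩⟩
    · rintro ⟨a, ha, h1, h2, h3, h4⟩ ⟨b, hb, k1, k2, k3, k4⟩
      apply Subtype.ext
      funext i
      fin_cases i
      · exact (neg_eq_zero.1 h2).trans (neg_eq_zero.1 k2).symm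
      · exact h3.trans k3.symm
    · intro i; exact Ideal.zero_mem _
    · have e : Ring.inverse (-1 : ZMod (p ^ ℓ)) = -1 := by
        have := Ring.inverse_unit (-1 : (ZMod (p ^ ℓ))ˣ)
        simpa using this
      simp [aux_pr0 p ℓ ℓ le_rfl, e]
  · rw [Nat.card_eq_zero]
    left
    constructor
    rintro ⟨a, ha, h1, h2, h3, h4⟩
    apply aux_pow_ne p r ℓ hp (by omega)
    rw [h3] at h1
    norm_num at h1
    exact h1

/-- Base cases: `σ_2(ℓ) = δ_{ℓ,r}`, and the values of `σ_4(ℓ)`. -/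
theorem stmt12 (p r : ℕ) (hp : p.Prime) (hr : 1 ≤ r) :
    (∀ ℓ, 1 ≤ ℓ → ℓ ≤ r → sigmaCount p r 2 ℓ = if ℓ = r then 1 else 0) ∧
    (1 < r → sigmaCount p r 4 1 = 0) ∧
    (∀ ℓ, 1 < ℓ → ℓ < r →
      (sigmaCount p r 4 ℓ : ℤ) = ((ℓ : ℤ) - 1) * ((p : ℤ) ^ r - (p : ℤ) ^ (r - 1))) ∧
    ((sigmaCount p r 4 r : ℤ) =
      ((r : ℤ) - 1) * (p : ℤ) ^ r - ((r : ℤ) - 2) * (p : ℤ) ^ (r - 1)) := by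
  haveI : NeZero (p ^ r) := ⟨pow_ne_zero _ hp.ne_zero⟩
  classical
  have hlow : ∀ ℓ, 1 ≤ ℓ → ℓ < r →
      (sigmaCount p r 4 ℓ : ℤ) = ((ℓ : ℤ) - 1) * ((p : ℤ) ^ r - (p : ℤ) ^ (r - 1)) := by
    intro ℓ h1 h2
    obtain ⟨m, rfl⟩ : ∃ m, ℓ = m + 1 := ⟨ℓ - 1, by omega⟩
    rw [aux_sigma4 p r _ h1, aux_sum p r (m + 1) hp h2.le m le_rfl, Finset.sum_eq_zero]
    · push_cast; ring
    · intro c hc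
      exact aux_G2 p r _ hp h2 c (Finset.mem_filter.1 hc).2
  refine ⟨fun ℓ _ h => aux_sigma2 p r ℓ hp h, fun h => ?_, fun ℓ h1 h2 => hlow ℓ h1.le h2, ?_⟩
  · have := hlow 1 le_rfl h
    simpa using this
  · obtain ⟨m, hm⟩ : ∃ m, r = m + 1 := ⟨r - 1, by omega⟩
    have hs := aux_sum p r r hp le_rfl m hm.ge
    have hf : (Finset.univ.filter fun c : ZMod (p ^ r) => (p : ZMod (p ^ r)) ^ (m + 1) ∣ c) =
        {0} := by
      ext c
      simp [aux_pr0 p r (m + 1) hm.le]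
    rw [hf, Finset.sum_singleton, aux_G3 p r hp hr] at hs
    rw [aux_sigma4 p r r hr, hs]
    have : (m : ℤ) = r - 1 := by rw [hm]; push_cast; ring
    rw [this]
    push_cast
    ring
end

section
/- Let p be a prime, r ∈ ℕ_{≥2}, and ℓ ∈ {1, …, r−1}. Then μ(ℓ)·(p−2)·p^{r−ℓ−1} + Σ_{j=ℓ+1}^{r} n_j·μ(j) = (ℓ−1)·p^{2r−ℓ} − (2ℓ−3)·p^{2r−ℓ−1} + (ℓ−1)·p^{2r−ℓ−2}. -/
/-- `μ(j)`. -/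
def muF (p r j : ℕ) : ℕ :=
  if j = r then (r - 1) * p ^ r - (r - 2) * p ^ (r - 1) else (p ^ r - p ^ (r - 1)) * (j - 1)

/-- `n_j`. -/
def nF (p r j : ℕ) : ℕ := if j = r then 1 else p ^ (r - j) - p ^ (r - j - 1)

theorem muF_last (q m d : ℕ) (h : d = 0) :
    (muF (q + 2) (m + 2 + d) (m + 2 + d) : ℤ) =
      ((q : ℤ) + 2) ^ (m + 1) * (((m : ℤ) + 1) * (q + 2) - m) := by
  subst h
  have hle : m * (q + 2) ^ (m + 1) ≤ (m + 1) * (q + 2) ^ (m + 2) := by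
    apply Nat.mul_le_mul (by omega)
    exact Nat.pow_le_pow_right (by omega) (by omega)
  simp only [muF, if_true, Nat.add_zero, Nat.add_sub_cancel]
  rw [show m + 2 - 1 = m + 1 by omega, Nat.cast_sub hle]
  push_cast
  ring

theorem muF_lt (q m d : ℕ) :
    (muF (q + 2) (m + 2 + d) (m + 1) : ℤ) = ((q : ℤ) + 2) ^ (m + 1 + d) * (q + 1) * m := by
  have hle : (q + 2) ^ (m + 1 + d) ≤ (q + 2) ^ (m + 2 + d) :=
    Nat.pow_le_pow_right (by omega) (by omega)
  rw [muF, if_neg (by omega), show m + 2 + d - 1 = m + 1 + d by omega, Nat.add_sub_cancel,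
    Nat.cast_mul, Nat.cast_sub hle]
  push_cast
  ring

theorem nF_lt (q m d : ℕ) :
    (nF (q + 2) (m + 2 + d) (m + 1) : ℤ) = ((q : ℤ) + 2) ^ d * (q + 1) := by
  have hle : (q + 2) ^ d ≤ (q + 2) ^ (d + 1) :=
    Nat.pow_le_pow_right (by omega) (by omega)
  rw [nF, if_neg (by omega), show m + 2 + d - (m + 1) = d + 1 by omega, Nat.add_sub_cancel,
    Nat.cast_sub hle]
  push_cast
  ring

theorem sum_tail (q d : ℕ) : ∀ m : ℕ,
    ((∑ j ∈ Finset.Icc (m + 2) (m + 2 + d),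
      nF (q + 2) (m + 2 + d) j * muF (q + 2) (m + 2 + d) j : ℕ) : ℤ) =
      ((q : ℤ) + 2) ^ (m + 1 + 2 * d) * (((m : ℤ) + 1) * (q + 2) - m) := by
  induction d with
  | zero =>
    intro m
    have := muF_last q m 0 rfl
    simp only [Nat.add_zero] at this
    simp [nF, this]
  | succ d ih =>
    intro m
    have h := ih (m + 1)
    rw [show m + 1 + 2 + d = m + 2 + (d + 1) by omega] at h
    have ha := muF_lt q (m + 1) d
    have hb := nF_lt q (m + 1) d
    rw [show m + 1 + 2 + d = m + 2 + (d + 1) by omega] at ha hb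
    rw [← Finset.add_sum_Ioc_eq_sum_Icc (by omega), ← Finset.Icc_add_one_left_eq_Ioc,
      Nat.cast_add, show m + 2 + 1 = m + 1 + 2 by omega, h, Nat.cast_mul]
    rw [show m + 1 + 1 = m + 2 by omega] at ha hb
    rw [ha, hb]
    push_cast
    ring

/-- For `1 ≤ ℓ ≤ r - 1`:
`μ(ℓ)(p-2)p^(r-ℓ-1) + Σ_{j=ℓ+1}^r n_j μ(j)
  = (ℓ-1)p^(2r-ℓ) - (2ℓ-3)p^(2r-ℓ-1) + (ℓ-1)p^(2r-ℓ-2)`. -/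
theorem stmt15 (p r : ℕ) (hp : p.Prime) (hr : 2 ≤ r) (ℓ : ℕ) (h1 : 1 ≤ ℓ) (h2 : ℓ ≤ r - 1) :
    ((muF p r ℓ * (p - 2) * p ^ (r - ℓ - 1) +
        ∑ j ∈ Finset.Icc (ℓ + 1) r, nF p r j * muF p r j : ℕ) : ℤ) =
      ((ℓ : ℤ) - 1) * (p : ℤ) ^ (2 * r - ℓ) - (2 * (ℓ : ℤ) - 3) * (p : ℤ) ^ (2 * r - ℓ - 1) +
        ((ℓ : ℤ) - 1) * (p : ℤ) ^ (2 * r - ℓ - 2) := by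
  obtain ⟨q, rfl⟩ : ∃ q, p = q + 2 := ⟨p - 2, by have := hp.two_le; omega⟩
  obtain ⟨m, rfl⟩ : ∃ m, ℓ = m + 1 := ⟨ℓ - 1, by omega⟩
  obtain ⟨d, rfl⟩ : ∃ d, r = m + 2 + d := ⟨r - (m + 2), by omega⟩
  rw [Nat.cast_add, sum_tail, Nat.cast_mul, Nat.cast_mul, muF_lt, Nat.add_sub_cancel,
    show m + 2 + d - (m + 1) - 1 = d by omega,
    show 2 * (m + 2 + d) - (m + 1) = m + 1 + 2 * d + 2 by omega,
    Nat.add_sub_cancel, show m + 1 + 2 * d + 2 - 1 = m + 1 + 2 * d + 1 by omega]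
  push_cast
  ring
end

section
/- Let p be a prime, s ∈ ℕ_{≥2}, and m ∈ ℕ_{≥3}. Then (as an identity of rational numbers) Σ_{j=2}^{s−1} p^{−j(m−1)}·[j−1]_{p^{m−2}}·(j−1) = (1/(p^{m−2}−1)) · ( ((1−s)p^{4−s−m} + (s−2)p^{3−s−m} + p^{2−m})/(p−1)² − ((1−s)p^{(m−1)(2−s)} + (s−2)p^{(m−1)(1−s)} + 1)/(p^{m−1}−1)² ). -/
lemma aux16 (x y : ℚ) (hx : x ≠ 0) (hy : y ≠ 0) (hx1 : x - 1 ≠ 0) (hy1 : y - 1 ≠ 0)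
    (hq : x * y - 1 ≠ 0) (n : ℕ) :
    (∑ k ∈ Finset.range n, ((x * y) ^ (k + 2))⁻¹ *
      (∑ i ∈ Finset.range (k + 1), y ^ i) * ((k : ℚ) + 1)) =
    (1 / (y - 1)) * (((-1 - (n : ℚ)) * (x ^ n * y)⁻¹ + (n : ℚ) * (x ^ (n + 1) * y)⁻¹ + y⁻¹) /
        (x - 1) ^ 2 -
      ((-1 - (n : ℚ)) * ((x * y) ^ n)⁻¹ + (n : ℚ) * ((x * y) ^ (n + 1))⁻¹ + 1) /
        (x * y - 1) ^ 2) := by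
  induction n with
  | zero => simp
  | succ n ih =>
    have hyy : y ≠ 1 := sub_ne_zero.mp hy1
    rw [Finset.sum_range_succ, ih, geom_sum_eq hyy]
    have e1 : (-1 - ((n + 1 : ℕ) : ℚ)) * (x ^ (n + 1) * y)⁻¹
        + ((n + 1 : ℕ) : ℚ) * (x ^ (n + 1 + 1) * y)⁻¹ + y⁻¹ =
        ((-1 - (n : ℚ)) * (x ^ n * y)⁻¹ + (n : ℚ) * (x ^ (n + 1) * y)⁻¹ + y⁻¹)
        + (n + 1) * (x ^ (n + 2) * y)⁻¹ * (x - 1) ^ 2 := by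
      push_cast
      field_simp
      ring
    have e2 : (-1 - ((n + 1 : ℕ) : ℚ)) * ((x * y) ^ (n + 1))⁻¹
        + ((n + 1 : ℕ) : ℚ) * ((x * y) ^ (n + 1 + 1))⁻¹ + 1 =
        ((-1 - (n : ℚ)) * ((x * y) ^ n)⁻¹ + (n : ℚ) * ((x * y) ^ (n + 1))⁻¹ + 1)
        + (n + 1) * ((x * y) ^ (n + 2))⁻¹ * (x * y - 1) ^ 2 := by
      have hz : x * y ≠ 0 := mul_ne_zero hx hy
      generalize x * y = z at *
      push_cast
      field_simp
      ring
    have dv : ∀ a b c : ℚ, c ≠ 0 → (a + b * c) / c = a / c + b := by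
      intro a b c hc
      rw [add_div, mul_div_cancel_right₀ _ hc]
    rw [e1, e2, dv _ _ _ (pow_ne_zero 2 hx1), dv _ _ _ (pow_ne_zero 2 hq)]
    have e3 : ((x * y) ^ (n + 2))⁻¹ * ((y ^ (n + 1) - 1) / (y - 1)) * ((n : ℚ) + 1) =
        (1 / (y - 1)) * ((n + 1) * (x ^ (n + 2) * y)⁻¹ - (n + 1) * ((x * y) ^ (n + 2))⁻¹) := by
      rw [mul_pow]
      field_simp
      ring
    rw [e3]
    ring

/-- The identity of rational numbers
`Σ_{j=2}^{s-1} p^(-j(m-1)) · [j-1]_{p^(m-2)} · (j-1)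
  = (1/(p^(m-2)-1)) · ( ((1-s)p^(4-s-m) + (s-2)p^(3-s-m) + p^(2-m))/(p-1)²
      − ((1-s)p^((m-1)(2-s)) + (s-2)p^((m-1)(1-s)) + 1)/(p^(m-1)-1)² )`. -/
theorem stmt16 (p : ℕ) (hp : p.Prime) (s : ℕ) (hs : 2 ≤ s) (m : ℕ) (hm : 3 ≤ m) :
    (∑ j ∈ Finset.Icc 2 (s - 1),
        (p : ℚ) ^ (-((j : ℤ) * ((m : ℤ) - 1))) *
          (∑ i ∈ Finset.range (j - 1), ((p : ℚ) ^ (m - 2)) ^ i) * ((j : ℚ) - 1)) =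
      (1 / ((p : ℚ) ^ (m - 2) - 1)) *
        (((1 - (s : ℚ)) * (p : ℚ) ^ (4 - (s : ℤ) - (m : ℤ)) +
            ((s : ℚ) - 2) * (p : ℚ) ^ (3 - (s : ℤ) - (m : ℤ)) +
            (p : ℚ) ^ (2 - (m : ℤ))) / ((p : ℚ) - 1) ^ 2 -
          ((1 - (s : ℚ)) * (p : ℚ) ^ (((m : ℤ) - 1) * (2 - (s : ℤ))) +
            ((s : ℚ) - 2) * (p : ℚ) ^ (((m : ℤ) - 1) * (1 - (s : ℤ))) + 1) /
            ((p : ℚ) ^ (m - 1) - 1) ^ 2) := by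
  obtain ⟨n, rfl⟩ := Nat.exists_eq_add_of_le hs
  obtain ⟨d, rfl⟩ := Nat.exists_eq_add_of_le hm
  have h1 : (1 : ℚ) < p := by exact_mod_cast hp.one_lt
  have hx : (p : ℚ) ≠ 0 := by positivity
  have hy1 : (1 : ℚ) < (p : ℚ) ^ (d + 1) := one_lt_pow₀ h1 (by omega)
  have hq1 : (1 : ℚ) < (p : ℚ) * (p : ℚ) ^ (d + 1) := by nlinarith
  have key := aux16 (p : ℚ) ((p : ℚ) ^ (d + 1)) hx (by positivity) (by linarith) (by linarith)
    (by linarith) n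
  have a1 : 3 + d - 2 = d + 1 := by omega
  have a2 : (p : ℚ) ^ (3 + d - 1) = (p : ℚ) * (p : ℚ) ^ (d + 1) := by
    rw [show 3 + d - 1 = d + 1 + 1 by omega, pow_succ']
  have z : ∀ (e : ℤ) (k : ℕ), e = -(k : ℤ) → (p : ℚ) ^ e = ((p : ℚ) ^ k)⁻¹ := by
    intro e k h
    rw [h, zpow_neg, zpow_natCast]
  have qk : ∀ k : ℕ, ((p : ℚ) * (p : ℚ) ^ (d + 1)) ^ k = (p : ℚ) ^ ((d + 2) * k) := by
    intro k
    rw [← pow_succ', ← pow_mul]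
  rw [a1, a2]
  rw [z (4 - ((2 + n : ℕ) : ℤ) - ((3 + d : ℕ) : ℤ)) (n + (d + 1)) (by push_cast; ring),
    z (3 - ((2 + n : ℕ) : ℤ) - ((3 + d : ℕ) : ℤ)) (n + 1 + (d + 1)) (by push_cast; ring),
    z (2 - ((3 + d : ℕ) : ℤ)) (d + 1) (by push_cast; ring),
    z ((((3 + d : ℕ) : ℤ) - 1) * (2 - ((2 + n : ℕ) : ℤ))) ((d + 2) * n) (by push_cast; ring),
    z ((((3 + d : ℕ) : ℤ) - 1) * (1 - ((2 + n : ℕ) : ℤ))) ((d + 2) * (n + 1)) (by push_cast; ring),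
    ← qk, ← qk, pow_add _ n, pow_add _ (n + 1),
    show (1 : ℚ) - ((2 + n : ℕ) : ℚ) = -1 - (n : ℚ) by push_cast; ring,
    show ((2 + n : ℕ) : ℚ) - 2 = (n : ℚ) by push_cast; ring, ← key]
  rw [show Finset.Icc 2 (2 + n - 1) = Finset.Ico 2 (2 + n) by
    ext j; simp only [Finset.mem_Icc, Finset.mem_Ico]; omega, Finset.sum_Ico_eq_sum_range,
    show 2 + n - 2 = n by omega]
  refine Finset.sum_congr rfl fun k _ => ?_
  rw [z _ ((d + 2) * (k + 2)) (by push_cast; ring), qk, show 2 + k - 1 = k + 1 by omega,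
    show ((2 + k : ℕ) : ℚ) - 1 = (k : ℚ) + 1 by push_cast; ring]
end
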